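/- Fix γ ∈ (0,1/2), a real α with 1/(n−Δ) < α < 1/(n−1), ε > 0, and φ as described, and set N = 2^{n−1}. Then there exist C > 0 and q₀ such that for every rational t = u/q in reduced form with gcd(u,q) = 1, q ≥ q₀ and 0 < t ≤ 1, and for every real x, one has |U(t,x) − U*(t,x)| ≤ C·t^{αn/N}·q^{1/N + ε}. -/

import Mathlib

open Filter Finset MeasureTheory

/-- `e(ξ) = exp(2πiξ)`. -/
noncomputable def ee (ξ : ℝ) : ℂ := Complex.exp (2 * Real.pi * Complex.I * ξ)

/-- The partial sum defining `U(t,x)`: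
`2γ + Σ_{0<|k|≤K} (sin(2πγk)/(πk))·e(t·k^n + x·k)`. -/
noncomputable def Upartial (n : ℕ) (γ t x : ℝ) (K : ℕ) : ℂ :=
  Complex.ofReal (2 * γ) +
    ∑ k ∈ (Finset.Icc (-(K : ℤ)) (K : ℤ)).filter (· ≠ 0),
      Complex.ofReal (Real.sin (2 * Real.pi * γ * (k : ℝ)) / (Real.pi * (k : ℝ))) *
        ee (t * (k : ℝ) ^ n + x * (k : ℝ))

/-- The smooth cutoff `φ`: `C^∞`, `φ(x) = 1` for `|x| ≤ 1/2`, `φ(x) = 0` for `|x| ≥ 2`,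
and `φ(x) + φ(1/x) = 1` for all `x ≠ 0`. -/
def GoodPhi (φ : ℝ → ℝ) : Prop :=
  ContDiff ℝ (⊤ : ℕ∞) φ ∧ (∀ x : ℝ, |x| ≤ 1 / 2 → φ x = 1) ∧ (∀ x : ℝ, 2 ≤ |x| → φ x = 0) ∧
    (∀ x : ℝ, x ≠ 0 → φ x + φ x⁻¹ = 1)

/-- `U*(t,x) = 2γ + (1/π)·Σ_{k≠0} φ(k·t^α)·(sin(2πγk)/k)·e(t·k^n + x·k)`
(the `k = 0` term vanishes since `sin(0)/0 = 0`). -/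
noncomputable def Ustar (n : ℕ) (γ : ℝ) (φ : ℝ → ℝ) (α t x : ℝ) : ℂ :=
  Complex.ofReal (2 * γ) + Complex.ofReal (1 / Real.pi) *
    ∑' k : ℤ,
      Complex.ofReal (φ ((k : ℝ) * t ^ α) * (Real.sin (2 * Real.pi * γ * (k : ℝ)) / (k : ℝ))) *
        ee (t * (k : ℝ) ^ n + x * (k : ℝ))

/-!
Cutting off the series of `U` by `φ(k t^α)` leaves the difference of the two sums
`∑ (1 - φ(k t^α)) e(t k^n + (x ± γ) k) / k`, and each of these is estimated separately. For
`|k| ≤ q²`, summation by parts reduces the sum to incomplete Weyl sums, which Weyl's inequality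
(repeated differencing down to linear phases, then the divisor bound) controls at the cost of an
arbitrarily small power of `q`. For `|k| > q²` the weight is `1 / k` and `e(u k^n / q + y k)` is
quasiperiodic in `k` with period `q`; pairing `k` with `-k`, its partial sums are
`(z - 1) (∑ z^m)²` times the complete sum, with `z = e(y q)`. A telescoping bound shows that
summing these against `1 / k²` costs no logarithm, uniformly in `z`.
-/

section DivisorBound

lemma succ_le_mul_pow {A y : ℝ} (hA : 1 ≤ A) (hy : 1 + A⁻¹ ≤ y) (a : ℕ) :
    (a : ℝ) + 1 ≤ A * y ^ a := by
  have hA0 : 0 < A := by linarith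
  have bernoulli : 1 + (a : ℝ) * A⁻¹ ≤ y ^ a :=
    (one_add_mul_le_pow (by linarith [inv_pos.2 hA0]) a).trans
      (pow_le_pow_left₀ (by positivity) hy a)
  calc (a : ℝ) + 1 ≤ A * (1 + a * A⁻¹) := by
        rw [mul_add, mul_one, mul_left_comm, mul_inv_cancel₀ hA0.ne']
        linarith
    _ ≤ A * y ^ a := by gcongr

lemma exists_forall_prime_succ_le_mul_pow {ε : ℝ} (hε : 0 < ε) :
    ∃ (A : ℝ) (P : ℕ), 1 ≤ A ∧ ∀ p : ℕ, p.Prime → ∀ a : ℕ,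
      (a : ℝ) + 1 ≤ (if p < P then A else 1) * ((p : ℝ) ^ ε) ^ a := by
  obtain ⟨P, hP⟩ := exists_nat_ge ((2 : ℝ) ^ (1 / ε))
  set A : ℝ := max 1 ((2 : ℝ) ^ ε - 1)⁻¹
  have hA : 1 ≤ A := le_max_left _ _
  have hsmall {p : ℕ} (hp : p.Prime) : 1 + A⁻¹ ≤ (p : ℝ) ^ ε := by
    have h2ε : 0 < (2 : ℝ) ^ ε - 1 := sub_pos.2 (Real.one_lt_rpow one_lt_two hε)
    have hAinv : A⁻¹ ≤ (2 : ℝ) ^ ε - 1 := inv_le_of_inv_le₀ h2ε (le_max_right _ _)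
    have : (2 : ℝ) ^ ε ≤ (p : ℝ) ^ ε := by
      gcongr
      exact_mod_cast hp.two_le
    linarith
  have hlarge {p : ℕ} (hp : P ≤ p) : 1 + (1 : ℝ)⁻¹ ≤ (p : ℝ) ^ ε := by
    have h : (2 : ℝ) ^ (1 / ε) ≤ p := hP.trans (by exact_mod_cast hp)
    calc 1 + (1 : ℝ)⁻¹ = ((2 : ℝ) ^ (1 / ε)) ^ ε := by
          rw [← Real.rpow_mul zero_le_two, one_div_mul_cancel hε.ne', Real.rpow_one]; norm_num
      _ ≤ (p : ℝ) ^ ε := by gcongr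
  refine ⟨A, P, hA, fun p hp a => ?_⟩
  split_ifs with h
  · exact succ_le_mul_pow hA (hsmall hp) a
  · exact succ_le_mul_pow le_rfl (hlarge (not_lt.1 h)) a

lemma natCast_rpow_eq_prod_primeFactors {m : ℕ} (hm : m ≠ 0) (ε : ℝ) :
    (m : ℝ) ^ ε = ∏ p ∈ m.primeFactors, ((p : ℝ) ^ ε) ^ m.factorization p := by
  have hprod : (m : ℝ) = ∏ p ∈ m.primeFactors, (p : ℝ) ^ m.factorization p := by
    conv_lhs => rw [← Nat.prod_factorization_pow_eq_self hm, Finsupp.prod]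
    push_cast
    rfl
  rw [hprod, ← Real.finsetProd_rpow _ _ fun p _ => by positivity]
  exact prod_congr rfl fun p _ => (Real.rpow_pow_comm p.cast_nonneg ε _).symm

/- Since `#(divisors m) / m ^ ε` is the product of `(a + 1) / p ^ (a ε)` over the prime powers
`p ^ a ∥ m`, only the finitely many primes with `p ^ ε < 2` contribute a factor larger than `1`. -/
lemma exists_card_divisors_le_mul_rpow {ε : ℝ} (hε : 0 < ε) :
    ∃ C : ℝ, 1 ≤ C ∧ ∀ m : ℕ, m ≠ 0 → (#m.divisors : ℝ) ≤ C * (m : ℝ) ^ ε := by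
  obtain ⟨A, P, hA, hprime⟩ := exists_forall_prime_succ_le_mul_pow hε
  refine ⟨A ^ P, one_le_pow₀ hA, fun m hm => ?_⟩
  calc (#m.divisors : ℝ) = ∏ p ∈ m.primeFactors, ((m.factorization p : ℝ) + 1) := by
        rw [Nat.card_divisors hm]
        push_cast
        rfl
    _ ≤ ∏ p ∈ m.primeFactors, (if p < P then A else 1) * ((p : ℝ) ^ ε) ^ m.factorization p :=
        prod_le_prod (fun p _ => by positivity)
          fun p hp => hprime p (Nat.prime_of_mem_primeFactors hp) _
    _ = A ^ #{p ∈ m.primeFactors | p < P} * (m : ℝ) ^ ε := by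
        rw [prod_mul_distrib, natCast_rpow_eq_prod_primeFactors hm, prod_ite, prod_const_one,
          mul_one, prod_const]
    _ ≤ A ^ P * (m : ℝ) ^ ε := by
        gcongr
        calc #{p ∈ m.primeFactors | p < P} ≤ #(range P) :=
              card_le_card fun p hp => mem_range.2 (mem_filter.1 hp).2
          _ = P := card_range P

end DivisorBound

section Exponential

lemma ee_eq_fourierChar (ξ : ℝ) : ee ξ = Real.fourierChar ξ := by
  rw [ee, Real.fourierChar_apply]
  push_cast
  ring_nf

lemma norm_ee (ξ : ℝ) : ‖ee ξ‖ = 1 := by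
  rw [ee_eq_fourierChar, Circle.norm_coe]

lemma ee_add (ξ η : ℝ) : ee (ξ + η) = ee ξ * ee η := by
  simp only [ee_eq_fourierChar, AddChar.map_add_eq_mul, Circle.coe_mul]

lemma ee_neg (ξ : ℝ) : ee (-ξ) = starRingEnd ℂ (ee ξ) := by
  simp only [ee_eq_fourierChar, AddChar.map_neg_eq_inv, Circle.coe_inv_eq_conj]

lemma ee_mul_natCast (ξ : ℝ) (m : ℕ) : ee (ξ * m) = ee ξ ^ m := by
  simp only [ee_eq_fourierChar, mul_comm ξ, ← nsmul_eq_mul, AddChar.map_nsmul_eq_pow,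
    Circle.coe_pow]

lemma ee_intCast (m : ℤ) : ee m = 1 := by
  rw [ee, Complex.exp_eq_one_iff]
  exact ⟨m, by push_cast; ring⟩

lemma ee_add_intCast (ξ : ℝ) (m : ℤ) : ee (ξ + m) = ee ξ := by
  rw [ee_add, ee_intCast, mul_one]

lemma norm_ee_sub_one (θ : ℝ) : ‖ee θ - 1‖ = 2 * |Real.sin (Real.pi * θ)| := by
  have h : ee θ = Complex.exp (Complex.I * ((2 * Real.pi * θ : ℝ) : ℂ)) := by
    rw [ee]
    push_cast
    ring_nf
  rw [h, Complex.norm_exp_I_mul_ofReal_sub_one, Real.norm_eq_abs, abs_mul, abs_two]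
  ring_nf

lemma four_mul_mul_one_sub_le_norm_ee_sub_one {θ : ℝ} (h0 : 0 ≤ θ) (h1 : θ ≤ 1) :
    4 * (θ * (1 - θ)) ≤ ‖ee θ - 1‖ := by
  have hsin {s : ℝ} (h0 : 0 ≤ s) (h : s ≤ 1 / 2) : 2 * s ≤ |Real.sin (Real.pi * s)| := by
    refine le_trans ?_ (le_abs_self _)
    have := Real.mul_le_sin (x := Real.pi * s) (by positivity) (by nlinarith [Real.pi_pos])
    rwa [← mul_assoc, div_mul_cancel₀ _ Real.pi_ne_zero] at this
  rw [norm_ee_sub_one]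
  rcases le_total θ (1 / 2) with h | h
  · nlinarith [hsin h0 h]
  · have hrefl : Real.sin (Real.pi * θ) = Real.sin (Real.pi * (1 - θ)) := by
      rw [mul_sub, mul_one, Real.sin_pi_sub]
    rw [hrefl]
    nlinarith [hsin (sub_nonneg.2 h1) (by linarith)]

end Exponential

section GeometricSum

lemma norm_sum_range_pow_le {z : ℂ} (hz : ‖z‖ = 1) (L : ℕ) : ‖∑ k ∈ range L, z ^ k‖ ≤ L := by
  refine (norm_sum_le _ _).trans ?_
  simp [hz]

lemma norm_sub_one_mul_norm_sum_range_pow_le {z : ℂ} (hz : ‖z‖ = 1) (L : ℕ) :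
    ‖z - 1‖ * ‖∑ k ∈ range L, z ^ k‖ ≤ 2 := by
  rw [← norm_mul, mul_comm, geom_sum_mul]
  refine (norm_sub_le _ _).trans ?_
  rw [norm_pow, hz, norm_one]
  norm_num

/-- The largest modulus of a geometric sum `1 + z + ⋯ + z ^ (L - 1)` of length `L ≤ K`. For
`z = e(θ)` it plays the role of the classical `min (K, 1 / ‖θ‖)`. -/
noncomputable def maxGeomSum (K : ℕ) (z : ℂ) : ℝ :=
  (range (K + 1)).sup' nonempty_range_add_one fun L => ‖∑ k ∈ range L, z ^ k‖

lemma norm_sum_range_pow_le_maxGeomSum (z : ℂ) {K L : ℕ} (hL : L ≤ K) :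
    ‖∑ k ∈ range L, z ^ k‖ ≤ maxGeomSum K z :=
  le_sup' (fun L => ‖∑ k ∈ range L, z ^ k‖) (mem_range_succ_iff.2 hL)

lemma maxGeomSum_nonneg (K : ℕ) (z : ℂ) : 0 ≤ maxGeomSum K z :=
  (norm_nonneg _).trans (norm_sum_range_pow_le_maxGeomSum z K.zero_le)

lemma maxGeomSum_le_natCast {z : ℂ} (hz : ‖z‖ = 1) (K : ℕ) : maxGeomSum K z ≤ K :=
  sup'_le _ _ fun L hL => (norm_sum_range_pow_le hz L).trans <| by
    exact_mod_cast mem_range_succ_iff.1 hL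

lemma norm_sub_one_mul_maxGeomSum_le {z : ℂ} (hz : ‖z‖ = 1) (K : ℕ) :
    ‖z - 1‖ * maxGeomSum K z ≤ 2 := by
  obtain ⟨L, -, hL⟩ := exists_mem_eq_sup' (nonempty_range_add_one (n := K))
    fun L => ‖∑ k ∈ range L, z ^ k‖
  rw [maxGeomSum, hL]
  exact norm_sub_one_mul_norm_sum_range_pow_le hz L

lemma maxGeomSum_ee_le {θ : ℝ} (h0 : 0 < θ) (h1 : θ < 1) (K : ℕ) :
    maxGeomSum K (ee θ) ≤ (1 / θ + 1 / (1 - θ)) / 2 := by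
  have hθ : 0 < 1 - θ := sub_pos.2 h1
  have h : 4 * (θ * (1 - θ)) * maxGeomSum K (ee θ) ≤ 2 :=
    (mul_le_mul_of_nonneg_right (four_mul_mul_one_sub_le_norm_ee_sub_one h0.le h1.le)
      (maxGeomSum_nonneg K _)).trans (norm_sub_one_mul_maxGeomSum_le (norm_ee θ) K)
  have e : (1 / θ + 1 / (1 - θ)) / 2 = 2 / (4 * (θ * (1 - θ))) := by
    field_simp
    ring
  rw [e, le_div_iff₀' (by positivity)]
  exact h

end GeometricSum

section WeylDifferencing

open Polynomial

lemma norm_sum_range_sq_le_two_mul_re (g : ℕ → ℂ) (L : ℕ) :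
    ‖∑ k ∈ range L, g k‖ ^ 2 ≤
      2 * (∑ m ∈ range L, g m * starRingEnd ℂ (∑ k ∈ range (m + 1), g k)).re := by
  have hadd (s z : ℂ) : ‖s + z‖ ^ 2 ≤ ‖s‖ ^ 2 + 2 * (z * starRingEnd ℂ (s + z)).re := by
    simp only [← Complex.normSq_eq_norm_sq, Complex.normSq_apply, Complex.add_re, Complex.add_im,
      Complex.mul_re, Complex.conj_re, Complex.conj_im]
    nlinarith [sq_nonneg z.re, sq_nonneg z.im]
  induction L with
  | zero => simp
  | succ L ih =>
    rw [sum_range_succ (fun m => g m * _), Complex.add_re, sum_range_succ]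
    linarith [hadd (∑ k ∈ range L, g k) (g L)]

lemma norm_sum_range_sq_le_two_mul_sum_norm (g : ℕ → ℂ) (L : ℕ) :
    ‖∑ k ∈ range L, g k‖ ^ 2 ≤
      2 * ∑ h ∈ range L, ‖∑ k ∈ range (L - h), g (k + h) * starRingEnd ℂ (g k)‖ := by
  have hdiag : ∑ m ∈ range L, g m * starRingEnd ℂ (∑ k ∈ range (m + 1), g k) =
      ∑ h ∈ range L, ∑ k ∈ range (L - h), g (k + h) * starRingEnd ℂ (g k) := by
    rw [← sum_range_diag_flip L fun h k => g (k + h) * starRingEnd ℂ (g k)]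
    refine sum_congr rfl fun m _ => ?_
    rw [map_sum, mul_sum, ← sum_range_reflect]
    refine sum_congr rfl fun k hk => ?_
    simp only [Nat.sub_add_cancel (mem_range_succ_iff.1 hk), Nat.add_sub_cancel]
  refine (norm_sum_range_sq_le_two_mul_re g L).trans ?_
  rw [hdiag]
  gcongr
  exact (Complex.re_le_norm _).trans (norm_sum_le _ _)

lemma norm_sum_ee_sq_le (f : ℕ → ℝ) {K L : ℕ} (hL : L ≤ K) :
    ‖∑ k ∈ range L, ee (f k)‖ ^ 2 ≤
      2 * ∑ h ∈ range K, ‖∑ k ∈ range (L - h), ee (f (k + h) - f k)‖ := by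
  refine (norm_sum_range_sq_le_two_mul_sum_norm _ L).trans ?_
  simp only [sub_eq_add_neg, ee_add, ee_neg]
  gcongr

lemma coeff_taylor_of_natDegree_le {p : ℝ[X]} {n : ℕ} (hp : p.natDegree ≤ n) (h : ℝ) :
    (taylor h p).coeff n = p.coeff n := by
  rcases hp.lt_or_eq with hlt | rfl
  · rw [coeff_eq_zero_of_natDegree_lt hlt,
      coeff_eq_zero_of_natDegree_lt (by rwa [natDegree_taylor])]
  · rw [coeff_taylor_natDegree, leadingCoeff]

lemma natDegree_taylor_sub_le {p : ℝ[X]} {d : ℕ} (hp : p.natDegree ≤ d + 1) (h : ℝ) :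
    (taylor h p - p).natDegree ≤ d :=
  natDegree_le_iff_coeff_eq_zero.2 fun j hj => by
    rw [coeff_sub, coeff_taylor_of_natDegree_le (hp.trans hj), sub_self]

lemma coeff_taylor_sub {p : ℝ[X]} {d : ℕ} (hp : p.natDegree ≤ d + 1) (h : ℝ) :
    (taylor h p - p).coeff d = (d + 1) * h * p.coeff (d + 1) := by
  have hlin : (hasseDeriv d p).natDegree ≤ 1 :=
    (natDegree_hasseDeriv_le _ _).trans (by lia)
  rw [coeff_sub, taylor_coeff, eq_X_add_C_of_natDegree_le_one hlin]
  simp only [hasseDeriv_coeff, eval_add, eval_mul, eval_C, eval_X, zero_add, Nat.choose_self,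
    add_comm 1 d, Nat.choose_succ_self_right]
  push_cast
  ring

/-- The multiple sum `∑ g (m * h₁ * ⋯ * hⱼ)` over `0 ≤ h₁, …, hⱼ < K`. -/
noncomputable def iterMulSum (K : ℕ) (g : ℕ → ℝ) : ℕ → ℕ → ℝ
  | 0 => g
  | j + 1 => fun m => ∑ h ∈ range K, iterMulSum K g j (m * h)

lemma iterMulSum_comp_mul (K : ℕ) (g : ℕ → ℝ) (h j m : ℕ) :
    iterMulSum K (fun i => g (h * i)) j m = iterMulSum K g j (h * m) := by
  induction j generalizing m with
  | zero => rfl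
  | succ j ih => simp only [iterMulSum, ih, mul_assoc]

lemma sum_range_pow_mul_le {f : ℕ → ℝ} (hf : ∀ h, 0 ≤ f h) (K : ℕ) {N : ℕ} (hN : N ≠ 0) :
    (∑ h ∈ range K, f h) ^ N * K ≤ (K : ℝ) ^ N * ∑ h ∈ range K, f h ^ N := by
  obtain ⟨N, rfl⟩ := Nat.exists_eq_succ_of_ne_zero hN
  have jensen : (∑ h ∈ range K, f h) ^ (N + 1) ≤ (K : ℝ) ^ N * ∑ h ∈ range K, f h ^ (N + 1) := by
    simpa only [card_range] using pow_sum_le_card_mul_sum_pow (s := range K) (fun h _ => hf h) N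
  calc (∑ h ∈ range K, f h) ^ (N + 1) * K
      ≤ (K ^ N * ∑ h ∈ range K, f h ^ (N + 1)) * K := by gcongr
    _ = K ^ (N + 1) * ∑ h ∈ range K, f h ^ (N + 1) := by ring

lemma pow_two_mul_mul_le_of_sq_le_sum {f g : ℕ → ℝ} (hf : ∀ h, 0 ≤ f h) {K N : ℕ} (hN : N ≠ 0)
    {s x : ℝ} (hx : 0 ≤ x) (hs : s ^ 2 ≤ 2 * ∑ h ∈ range K, f h)
    (hfg : ∀ h, f h ^ N * x ≤ (2 * K : ℝ) ^ N * g h) :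
    s ^ (2 * N) * (K * x) ≤ (2 * K : ℝ) ^ (2 * N) * ∑ h ∈ range K, g h :=
  calc s ^ (2 * N) * (K * x) = (s ^ 2) ^ N * (K * x) := by rw [pow_mul]
    _ ≤ (2 * ∑ h ∈ range K, f h) ^ N * (K * x) := by gcongr
    _ = 2 ^ N * ((∑ h ∈ range K, f h) ^ N * K) * x := by ring
    _ ≤ 2 ^ N * (K ^ N * ∑ h ∈ range K, f h ^ N) * x := by
        gcongr _ * ?_ * _
        exact sum_range_pow_mul_le hf K hN
    _ = (2 * K) ^ N * ∑ h ∈ range K, f h ^ N * x := by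
        rw [← sum_mul]
        ring
    _ ≤ (2 * K) ^ N * ∑ h ∈ range K, (2 * K) ^ N * g h := by
        gcongr ?_ * ?_
        exact sum_le_sum fun h _ => hfg h
    _ = (2 * K) ^ (2 * N) * ∑ h ∈ range K, g h := by
        rw [← mul_sum]
        ring

lemma norm_sum_ee_linear_le {p : ℝ[X]} (hp : p.natDegree ≤ 1) {K L : ℕ} (hL : L ≤ K) :
    ‖∑ k ∈ range L, ee (p.eval (k : ℝ))‖ ≤ maxGeomSum K (ee (p.coeff 1)) := by
  have h : ∑ k ∈ range L, ee (p.eval (k : ℝ)) =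
      (∑ k ∈ range L, ee (p.coeff 1) ^ k) * ee (p.coeff 0) := by
    rw [sum_mul]
    refine sum_congr rfl fun k _ => ?_
    conv_lhs => rw [eq_X_add_C_of_natDegree_le_one hp]
    simp only [eval_add, eval_mul, eval_C, eval_X, ee_add, ee_mul_natCast]
  rw [h, norm_mul, norm_ee, mul_one]
  exact norm_sum_range_pow_le_maxGeomSum _ hL

lemma norm_sum_ee_pow_mul_le_iterMulSum {d : ℕ} {p : ℝ[X]} (hp : p.natDegree ≤ d + 1)
    {K L : ℕ} (hL : L ≤ K) :
    ‖∑ k ∈ range L, ee (p.eval (k : ℝ))‖ ^ 2 ^ d * (K : ℝ) ^ (d + 1) ≤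
      (2 * K : ℝ) ^ 2 ^ d *
        iterMulSum K
          (fun m => maxGeomSum K (ee ((d + 1).factorial * p.coeff (d + 1) * m))) d 1 := by
  induction d generalizing p L with
  | zero =>
    have := norm_sum_ee_linear_le hp hL
    have hK : (0 : ℝ) ≤ K * maxGeomSum K (ee (p.coeff 1)) :=
      mul_nonneg K.cast_nonneg (maxGeomSum_nonneg _ _)
    simp only [iterMulSum, pow_zero, pow_one, zero_add, Nat.factorial_one, Nat.cast_one, one_mul,
      mul_one]
    nlinarith [K.cast_nonneg (α := ℝ)]
  | succ d ih =>
    set S : ℕ → ℝ := fun h => ‖∑ k ∈ range (L - h), ee ((taylor (h : ℝ) p - p).eval (k : ℝ))‖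
    set G : ℕ → ℝ := fun m =>
      maxGeomSum K (ee ((d + 1 + 1).factorial * p.coeff (d + 1 + 1) * m))
    have hS (h : ℕ) : S h ^ 2 ^ d * (K : ℝ) ^ (d + 1) ≤
        (2 * K : ℝ) ^ 2 ^ d * iterMulSum K G d h := by
      refine (ih (natDegree_taylor_sub_le hp h) ((L.sub_le h).trans hL)).trans_eq ?_
      rw [← mul_one h, ← iterMulSum_comp_mul, coeff_taylor_sub hp]
      congr 3 with i
      simp only [G, Nat.factorial_succ (d + 1)]
      push_cast
      ring_nf
    have hdiff : ‖∑ k ∈ range L, ee (p.eval (k : ℝ))‖ ^ 2 ≤ 2 * ∑ h ∈ range K, S h := by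
      refine (norm_sum_ee_sq_le _ hL).trans_eq ?_
      simp only [S, eval_sub, taylor_eval, Nat.cast_add]
    rw [pow_succ' 2 d, pow_succ' (K : ℝ) (d + 1)]
    simp only [iterMulSum, one_mul]
    exact pow_two_mul_mul_le_of_sq_le_sum (fun _ => norm_nonneg _) (pow_ne_zero d two_ne_zero)
      (by positivity) hdiff hS

end WeylDifferencing

section DivisorCounting

lemma card_filter_mul_eq_le_card_divisors (H K : ℕ) {m : ℕ} (hm : m ≠ 0) :
    #{x ∈ Icc 1 H ×ˢ Icc 1 K | x.1 * x.2 = m} ≤ #m.divisors := by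
  refine card_le_card_of_injOn Prod.fst (fun x hx => ?_) fun x hx y hy hxy => ?_
  · exact Nat.mem_divisors.2 ⟨⟨x.2, (mem_filter.1 hx).2.symm⟩, hm⟩
  · obtain ⟨hx, hxm⟩ := mem_filter.1 hx
    have hx1 : 0 < x.1 := (mem_Icc.1 (mem_product.1 hx).1).1
    refine Prod.ext hxy (Nat.eq_of_mul_eq_mul_left hx1 ?_)
    rw [hxm, show x.1 = y.1 from hxy, (mem_filter.1 hy).2]

lemma sum_sum_mul_le_mul_sum {F : ℕ → ℝ} (hF : ∀ m, 0 ≤ F m) {H K : ℕ} {D : ℝ}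
    (hD : ∀ m ∈ Icc 1 (H * K), (#m.divisors : ℝ) ≤ D) :
    ∑ m ∈ Icc 1 H, ∑ h ∈ Icc 1 K, F (m * h) ≤ D * ∑ m ∈ Icc 1 (H * K), F m := by
  have hmaps : ∀ x ∈ Icc 1 H ×ˢ Icc 1 K, x.1 * x.2 ∈ Icc 1 (H * K) := by
    intro x hx
    simp only [mem_product, mem_Icc] at hx ⊢
    exact ⟨Nat.mul_pos hx.1.1 hx.2.1, Nat.mul_le_mul hx.1.2 hx.2.2⟩
  rw [← sum_product', ← sum_fiberwise_of_maps_to hmaps, mul_sum]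
  refine sum_le_sum fun m hm => ?_
  calc ∑ x ∈ Icc 1 H ×ˢ Icc 1 K with x.1 * x.2 = m, F (x.1 * x.2)
      = #{x ∈ Icc 1 H ×ˢ Icc 1 K | x.1 * x.2 = m} * F m := by
        rw [sum_congr rfl fun x hx => by rw [(mem_filter.1 hx).2], sum_const, nsmul_eq_mul]
    _ ≤ D * F m := by
        gcongr
        · exact hF m
        · refine le_trans ?_ (hD m hm)
          exact_mod_cast card_filter_mul_eq_le_card_divisors H K
            (Nat.one_le_iff_ne_zero.1 (mem_Icc.1 hm).1)

section IterMulSum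

variable {K : ℕ} {g : ℕ → ℝ}

lemma iterMulSum_nonneg (hg : ∀ m, 0 ≤ g m) (j m : ℕ) : 0 ≤ iterMulSum K g j m := by
  induction j generalizing m with
  | zero => exact hg m
  | succ j ih => exact sum_nonneg fun h _ => ih _

lemma iterMulSum_zero_right (j : ℕ) : iterMulSum K g j 0 = (K : ℝ) ^ j * g 0 := by
  induction j with
  | zero => simp [iterMulSum]
  | succ j ih =>
    simp only [iterMulSum, zero_mul, ih, sum_const, card_range, nsmul_eq_mul, pow_succ']
    ring

lemma sum_range_le_add_sum_Icc (hg : ∀ m, 0 ≤ g m) (K : ℕ) :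
    ∑ h ∈ range K, g h ≤ g 0 + ∑ h ∈ Icc 1 K, g h :=
  calc ∑ h ∈ range K, g h ≤ ∑ h ∈ range (K + 1), g h :=
        sum_le_sum_of_subset_of_nonneg (range_mono K.le_succ) fun _ _ _ => hg _
    _ = g 0 + ∑ h ∈ Icc 1 K, g h := by
        rw [range_eq_Ico, sum_eq_sum_Ico_succ_bot K.succ_pos]
        rfl

lemma iterMulSum_succ_le (hg : ∀ m, 0 ≤ g m) (j m : ℕ) :
    iterMulSum K g (j + 1) m ≤ K ^ j * g 0 + ∑ h ∈ Icc 1 K, iterMulSum K g j (m * h) := by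
  refine (sum_range_le_add_sum_Icc (g := fun h => iterMulSum K g j (m * h))
    (fun _ => iterMulSum_nonneg hg _ _) K).trans_eq ?_
  simp only [mul_zero, iterMulSum_zero_right]

lemma sum_iterMulSum_le (hK : 1 ≤ K) (hg : ∀ m, 0 ≤ g m) (hg0 : g 0 ≤ K) {D : ℝ} (hD1 : 1 ≤ D)
    (j : ℕ) {H : ℕ} (hD : ∀ m ∈ Icc 1 (H * K ^ j), (#m.divisors : ℝ) ≤ D) :
    ∑ m ∈ Icc 1 H, iterMulSum K g j m ≤
      D ^ j * (∑ m ∈ Icc 1 (H * K ^ j), g m + j * (H * K ^ j)) := by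
  induction j generalizing H with
  | zero => simp [iterMulSum]
  | succ j ih =>
    have hassoc : H * K * K ^ j = H * K ^ (j + 1) := by ring
    have hcount : ∑ m ∈ Icc 1 H, ∑ h ∈ Icc 1 K, iterMulSum K g j (m * h) ≤
        D * ∑ m ∈ Icc 1 (H * K), iterMulSum K g j m := by
      refine sum_sum_mul_le_mul_sum (F := iterMulSum K g j) (iterMulSum_nonneg hg j)
        fun m hm => hD m ?_
      exact Icc_subset_Icc_right (Nat.mul_le_mul_left H (Nat.le_self_pow j.succ_ne_zero K)) hm
    have hIH := ih (H := H * K) (by rwa [hassoc])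
    rw [hassoc] at hIH
    have hone : (H : ℝ) * K ^ (j + 1) ≤ D ^ (j + 1) * (H * K ^ (j + 1)) :=
      le_mul_of_one_le_left (by positivity) (one_le_pow₀ hD1)
    calc ∑ m ∈ Icc 1 H, iterMulSum K g (j + 1) m
        ≤ ∑ m ∈ Icc 1 H, (K ^ j * g 0 + ∑ h ∈ Icc 1 K, iterMulSum K g j (m * h)) :=
          sum_le_sum fun m _ => iterMulSum_succ_le hg j m
      _ = H * (K ^ j * g 0) + ∑ m ∈ Icc 1 H, ∑ h ∈ Icc 1 K, iterMulSum K g j (m * h) := by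
          rw [sum_add_distrib, sum_const, Nat.card_Icc, nsmul_eq_mul, Nat.add_sub_cancel]
      _ ≤ H * (K ^ j * K) +
            D * (D ^ j * (∑ m ∈ Icc 1 (H * K ^ (j + 1)), g m + j * (↑(H * K) * K ^ j))) := by
          gcongr
          exact hcount.trans (by gcongr)
      _ ≤ D ^ (j + 1) * (∑ m ∈ Icc 1 (H * K ^ (j + 1)), g m + ↑(j + 1) * (H * K ^ (j + 1))) := by
          push_cast
          linear_combination hone

lemma iterMulSum_succ_one_le (hK : 1 ≤ K) (hg : ∀ m, 0 ≤ g m) (hg0 : g 0 ≤ K) {D : ℝ}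
    (hD1 : 1 ≤ D) {j : ℕ} (hD : ∀ m ∈ Icc 1 (K ^ (j + 1)), (#m.divisors : ℝ) ≤ D) :
    iterMulSum K g (j + 1) 1 ≤
      D ^ j * (∑ m ∈ Icc 1 (K ^ (j + 1)), g m + (j + 1) * K ^ (j + 1)) := by
  have hpow : K * K ^ j = K ^ (j + 1) := (pow_succ' K j).symm
  have hsum := sum_iterMulSum_le hK hg hg0 hD1 j (H := K) (by rwa [hpow])
  have hone : (K : ℝ) ^ (j + 1) ≤ D ^ j * K ^ (j + 1) :=
    le_mul_of_one_le_left (by positivity) (one_le_pow₀ hD1)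
  rw [hpow, ← pow_succ'] at hsum
  calc iterMulSum K g (j + 1) 1 ≤ K ^ j * g 0 + ∑ h ∈ Icc 1 K, iterMulSum K g j h := by
        simpa only [one_mul] using iterMulSum_succ_le hg j 1
    _ ≤ K ^ j * K + D ^ j * (∑ m ∈ Icc 1 (K ^ (j + 1)), g m + j * K ^ (j + 1)) := by
        gcongr
    _ ≤ D ^ j * (∑ m ∈ Icc 1 (K ^ (j + 1)), g m + (j + 1) * K ^ (j + 1)) := by
        linear_combination hone

end IterMulSum

end DivisorCounting

section ResidueSums

lemma sum_range_natCast_zmod (q : ℕ) [NeZero q] (F : ZMod q → ℝ) :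
    ∑ m ∈ range q, F m = ∑ r, F r := by
  obtain ⟨p, rfl⟩ := Nat.exists_eq_succ_of_ne_zero (NeZero.ne q)
  rw [sum_range]
  exact sum_congr rfl fun i _ => congrArg F (Fin.cast_val_eq_self i)

lemma sum_range_mul_natCast_zmod (q : ℕ) [NeZero q] (F : ZMod q → ℝ) (B : ℕ) :
    ∑ m ∈ range (q * B), F m = B * ∑ r, F r := by
  induction B with
  | zero => simp
  | succ B ih =>
    rw [mul_add_one, sum_range_add, ih, ← sum_range_natCast_zmod]
    simp only [Nat.cast_add, Nat.cast_mul, CharP.cast_eq_zero, zero_mul, zero_add]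
    ring

lemma sum_Icc_natCast_zmod_le {q : ℕ} [NeZero q] {F : ZMod q → ℝ} (hF : ∀ r, 0 ≤ F r) (X : ℕ) :
    ∑ m ∈ Icc 1 X, F m ≤ (X / q + 1) * ∑ r, F r :=
  calc ∑ m ∈ Icc 1 X, F m ≤ ∑ m ∈ range (q * (X / q + 1)), F m := by
        refine sum_le_sum_of_subset_of_nonneg (fun m hm => ?_) fun _ _ _ => hF _
        exact mem_range.2 ((mem_Icc.1 hm).2.trans_lt (Nat.lt_mul_div_succ X (NeZero.pos q)))
    _ = (X / q + 1 : ℕ) * ∑ r, F r := sum_range_mul_natCast_zmod q F _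
    _ ≤ (X / q + 1) * ∑ r, F r := by
        gcongr
        · exact sum_nonneg fun r _ => hF r
        · push_cast
          gcongr
          exact Nat.cast_div_le

lemma sum_Icc_mul_left_le {F : ℕ → ℝ} (hF : ∀ m, 0 ≤ F m) {A : ℕ} (hA : 0 < A) (X : ℕ) :
    ∑ m ∈ Icc 1 X, F (A * m) ≤ ∑ m ∈ Icc 1 (A * X), F m := by
  rw [← sum_image (g := (A * ·)) fun a _ b _ h => Nat.eq_of_mul_eq_mul_left hA h]
  refine sum_le_sum_of_subset_of_nonneg (image_subset_iff.2 fun m hm => ?_) fun _ _ _ => hF _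
  rw [mem_Icc] at hm ⊢
  exact ⟨Nat.mul_pos hA hm.1, Nat.mul_le_mul_left A hm.2⟩

lemma ee_intCast_div (q : ℕ) [NeZero q] (j : ℤ) : ee (j / q) = ZMod.stdAddChar (j : ZMod q) := by
  rw [ZMod.stdAddChar_coe, ee]
  push_cast
  ring_nf

lemma sum_inv_succ_le_one_add_log (q : ℕ) :
    ∑ i ∈ range q, (1 : ℝ) / (i + 1) ≤ 1 + Real.log q := by
  simpa [harmonic] using harmonic_le_one_add_log q

lemma maxGeomSum_ee_succ_div_le (K : ℕ) {i p : ℕ} (hi : i < p) :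
    maxGeomSum K (ee ((i + 1 : ℕ) / (p + 1 : ℕ))) ≤
      (p + 1) / 2 * (1 / ((i : ℝ) + 1) + 1 / (((p - 1 - i : ℕ) : ℝ) + 1)) := by
  have hsub : ((p - 1 - i : ℕ) : ℝ) + 1 = p - i := by
    rw [Nat.sub_sub, Nat.cast_sub (by lia)]
    push_cast
    ring
  have hpi : (0 : ℝ) < p - i := sub_pos.2 (by exact_mod_cast hi)
  have hcompl : 1 - ((i + 1 : ℕ) : ℝ) / (p + 1 : ℕ) = (p - i) / (p + 1) := by
    push_cast
    field_simp
    ring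
  refine (maxGeomSum_ee_le (by positivity) ?_ K).trans_eq ?_
  · rw [div_lt_one (by positivity)]
    exact_mod_cast Nat.succ_lt_succ hi
  · rw [hsub, hcompl]
    push_cast
    field_simp

lemma sum_range_maxGeomSum_le (K q : ℕ) [NeZero q] :
    ∑ m ∈ range q, maxGeomSum K (ee (m / q)) ≤ K + q * (1 + Real.log q) := by
  obtain ⟨p, rfl⟩ := Nat.exists_eq_succ_of_ne_zero (NeZero.ne q)
  calc ∑ m ∈ range (p + 1), maxGeomSum K (ee (m / (p + 1 : ℕ)))
      = ∑ i ∈ range p, maxGeomSum K (ee ((i + 1 : ℕ) / (p + 1 : ℕ))) +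
          maxGeomSum K (ee ((0 : ℕ) / (p + 1 : ℕ))) := sum_range_succ' _ _
    _ ≤ ∑ i ∈ range p, ((p + 1) / 2 * (1 / ((i : ℝ) + 1) + 1 / (((p - 1 - i : ℕ) : ℝ) + 1))) +
          K :=
        add_le_add (sum_le_sum fun i hi => maxGeomSum_ee_succ_div_le K (mem_range.1 hi))
          (maxGeomSum_le_natCast (norm_ee _) K)
    _ = (p + 1) * ∑ i ∈ range p, 1 / ((i : ℝ) + 1) + K := by
        rw [← mul_sum, sum_add_distrib, sum_range_reflect fun i : ℕ => 1 / ((i : ℝ) + 1)]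
        ring
    _ ≤ (p + 1) * (1 + Real.log (p + 1 : ℕ)) + K := by
        gcongr
        exact (sum_le_sum_of_subset_of_nonneg (range_mono p.le_succ)
          fun _ _ _ => by positivity).trans (sum_inv_succ_le_one_add_log (p + 1))
    _ = K + (p + 1 : ℕ) * (1 + Real.log (p + 1 : ℕ)) := by
        push_cast
        ring

lemma sum_Icc_maxGeomSum_le {u : ℤ} {q : ℕ} [NeZero q] (hu : IsCoprime u q) (K X : ℕ) {A : ℕ}
    (hA : 0 < A) :
    ∑ m ∈ Icc 1 X, maxGeomSum K (ee (A * (u / q) * m)) ≤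
      (A * X / q + 1) * (K + q * (1 + Real.log q)) := by
  set F : ZMod q → ℝ := fun r => maxGeomSum K (ZMod.stdAddChar ((u : ZMod q) * r))
  have hval (m : ℕ) : maxGeomSum K (ee (A * (u / q) * m)) = F ((A * m : ℕ) : ZMod q) := by
    have h : (A * (u / q) * m : ℝ) = ((u * (A * m : ℕ) : ℤ) : ℝ) / q := by
      push_cast
      ring
    rw [h, ee_intCast_div, Int.cast_mul, Int.cast_natCast]
  have hperiod : ∑ r, F r ≤ K + q * (1 + Real.log q) := by
    have hunit : IsUnit (u : ZMod q) := (ZMod.coe_int_isUnit_iff_isCoprime u q).2 hu.symm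
    calc ∑ r, F r = ∑ r : ZMod q, maxGeomSum K (ZMod.stdAddChar r) :=
          Equiv.sum_comp hunit.unit.mulLeft fun r => maxGeomSum K (ZMod.stdAddChar r)
      _ = ∑ m ∈ range q, maxGeomSum K (ee (m / q)) := by
          rw [← sum_range_natCast_zmod q fun r => maxGeomSum K (ZMod.stdAddChar r)]
          refine sum_congr rfl fun m _ => ?_
          rw [← Int.cast_natCast (R := ZMod q), ← ee_intCast_div, Int.cast_natCast]
      _ ≤ K + q * (1 + Real.log q) := sum_range_maxGeomSum_le K q
  have hF0 (r : ZMod q) : 0 ≤ F r := maxGeomSum_nonneg _ _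
  calc ∑ m ∈ Icc 1 X, maxGeomSum K (ee (A * (u / q) * m))
      = ∑ m ∈ Icc 1 X, F ((A * m : ℕ) : ZMod q) := sum_congr rfl fun m _ => hval m
    _ ≤ ∑ m ∈ Icc 1 (A * X), F m :=
        sum_Icc_mul_left_le (F := fun m => F m) (fun m => hF0 m) hA X
    _ ≤ ((A * X : ℕ) / q + 1) * ∑ r, F r := sum_Icc_natCast_zmod_le hF0 _
    _ ≤ (A * X / q + 1) * (K + q * (1 + Real.log q)) := by
        push_cast
        gcongr

end ResidueSums

section WeylInequality

open Polynomial

lemma one_add_log_le_mul_rpow {ε : ℝ} (hε : 0 < ε) {x : ℝ} (hx : 1 ≤ x) :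
    1 + Real.log x ≤ (1 + 1 / ε) * x ^ ε := by
  have hlog := Real.log_le_rpow_div (zero_le_one.trans hx) hε
  have hone : 1 ≤ x ^ ε := Real.one_le_rpow hx hε.le
  rw [add_mul, one_mul, one_div_mul_eq_div]
  linarith

lemma exists_forall_card_divisors_le (d : ℕ) {ε : ℝ} (hε : 0 < ε) :
    ∃ C : ℝ, 1 ≤ C ∧ ∀ K : ℕ, 1 ≤ K → ∃ D : ℝ, 1 ≤ D ∧ D ^ d ≤ C * (K : ℝ) ^ ε ∧
      ∀ m ∈ Icc 1 (K ^ (d + 1)), (#m.divisors : ℝ) ≤ D := by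
  set δ : ℝ := ε / (d + 1) ^ 2 with hδ
  have hδ0 : 0 < δ := by positivity
  obtain ⟨C, hC, hdiv⟩ := exists_card_divisors_le_mul_rpow hδ0
  refine ⟨C ^ (d + 1), one_le_pow₀ hC, fun K hK => ?_⟩
  have hK1 : (1 : ℝ) ≤ K := by exact_mod_cast hK
  have hD : 1 ≤ C * ((K : ℝ) ^ (d + 1)) ^ δ :=
    one_le_mul_of_one_le_of_one_le hC (Real.one_le_rpow (one_le_pow₀ hK1) hδ0.le)
  refine ⟨C * ((K : ℝ) ^ (d + 1)) ^ δ, hD, ?_, fun m hm => ?_⟩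
  · calc (C * ((K : ℝ) ^ (d + 1)) ^ δ) ^ d ≤ (C * ((K : ℝ) ^ (d + 1)) ^ δ) ^ (d + 1) :=
          pow_le_pow_right₀ hD d.le_succ
      _ = C ^ (d + 1) * (K : ℝ) ^ ε := by
          rw [mul_pow, ← Real.rpow_natCast (K : ℝ), ← Real.rpow_mul K.cast_nonneg,
            ← Real.rpow_mul_natCast K.cast_nonneg, hδ]
          congr 2
          push_cast
          field_simp
  · obtain ⟨hm1, hmK⟩ := mem_Icc.1 hm
    refine (hdiv m (Nat.one_le_iff_ne_zero.1 hm1)).trans ?_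
    gcongr
    exact_mod_cast hmK

/-- The quantity `1 / K + 1 / q + q / K ^ n` in Weyl's inequality for a sum of length `K` and a
polynomial of degree `n` whose leading coefficient has denominator `q`. -/
noncomputable def weylFactor (n K q : ℕ) : ℝ := 1 / K + 1 / q + q / (K : ℝ) ^ n

lemma weylFactor_nonneg (n K q : ℕ) : 0 ≤ weylFactor n K q := by
  unfold weylFactor
  positivity

lemma pow_mul_weylFactor (d K q : ℕ) [NeZero K] :
    (K : ℝ) ^ (d + 2) * weylFactor (d + 2) K q = K ^ (d + 1) + K ^ (d + 2) / q + q := by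
  have hK : (K : ℝ) ≠ 0 := NeZero.ne _
  rw [weylFactor]
  field_simp
  ring

lemma sum_Icc_maxGeomSum_le_weylFactor {u : ℤ} {q : ℕ} [NeZero q] (hu : IsCoprime u q)
    (d K : ℕ) [NeZero K] {A : ℕ} (hA : 1 ≤ A) :
    ∑ m ∈ Icc 1 (K ^ (d + 1)), maxGeomSum K (ee (A * (u / q) * m)) ≤
      2 * A * (1 + Real.log q) * (K ^ (d + 2) * weylFactor (d + 2) K q) := by
  set Λ : ℝ := 1 + Real.log q
  have hK1 : (1 : ℝ) ≤ K := by exact_mod_cast NeZero.one_le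
  have hA1 : (1 : ℝ) ≤ A := by exact_mod_cast hA
  have hΛ : 1 ≤ Λ := le_add_of_nonneg_right (Real.log_nonneg (by exact_mod_cast NeZero.one_le))
  have hq0 : (q : ℝ) ≠ 0 := NeZero.ne _
  have hpow : (K : ℝ) ≤ K ^ (d + 1) := le_self_pow₀ hK1 d.succ_ne_zero
  have hdiv : 0 ≤ (K : ℝ) ^ (d + 2) / q := by positivity
  rw [pow_mul_weylFactor]
  calc ∑ m ∈ Icc 1 (K ^ (d + 1)), maxGeomSum K (ee (A * (u / q) * m))
      ≤ (A * (K ^ (d + 1) : ℕ) / q + 1) * (K + q * Λ) := sum_Icc_maxGeomSum_le hu K _ hA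
    _ ≤ (A * K ^ (d + 1) / q + A) * (Λ * K + q * Λ) := by
        push_cast
        gcongr
        exact le_mul_of_one_le_left K.cast_nonneg hΛ
    _ = A * Λ * (K ^ (d + 2) / q + K ^ (d + 1) + K + q) := by
        field_simp
        ring
    _ ≤ A * Λ * (2 * (K ^ (d + 1) + K ^ (d + 2) / q + q)) := by
        gcongr
        linarith [q.cast_nonneg (α := ℝ)]
    _ = 2 * A * Λ * (K ^ (d + 1) + K ^ (d + 2) / q + q) := by ring

lemma iterMulSum_maxGeomSum_le {u : ℤ} {q : ℕ} [NeZero q] (hu : IsCoprime u q) (d K : ℕ)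
    [NeZero K] {A : ℕ} (hA : 1 ≤ A) {D : ℝ} (hD1 : 1 ≤ D)
    (hD : ∀ m ∈ Icc 1 (K ^ (d + 1)), (#m.divisors : ℝ) ≤ D) :
    iterMulSum K (fun m => maxGeomSum K (ee (A * (u / q) * m))) (d + 1) 1 ≤
      (2 * A + d + 1) * (D ^ d * (1 + Real.log q)) * (K ^ (d + 2) * weylFactor (d + 2) K q) := by
  set Λ : ℝ := 1 + Real.log q
  set W : ℝ := K ^ (d + 2) * weylFactor (d + 2) K q with hW
  have hΛ : 1 ≤ Λ := le_add_of_nonneg_right (Real.log_nonneg (by exact_mod_cast NeZero.one_le))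
  have hW0 : 0 ≤ W := mul_nonneg (by positivity) (weylFactor_nonneg _ _ _)
  have hKW : (K : ℝ) ^ (d + 1) ≤ W := by
    rw [hW, pow_mul_weylFactor, add_assoc]
    exact le_add_of_nonneg_right (by positivity)
  set g : ℕ → ℝ := fun m => maxGeomSum K (ee (A * (u / q) * m))
  have hg (m : ℕ) : 0 ≤ g m := maxGeomSum_nonneg _ _
  have hg0 : g 0 ≤ K := maxGeomSum_le_natCast (norm_ee _) K
  calc iterMulSum K g (d + 1) 1
      ≤ D ^ d * (∑ m ∈ Icc 1 (K ^ (d + 1)), g m + (d + 1) * K ^ (d + 1)) :=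
        iterMulSum_succ_one_le NeZero.one_le hg hg0 hD1 hD
    _ ≤ D ^ d * (2 * A * Λ * W + (d + 1) * (Λ * W)) := by
        gcongr
        · exact sum_Icc_maxGeomSum_le_weylFactor hu d K hA
        · exact hKW.trans (le_mul_of_one_le_left hW0 hΛ)
    _ = (2 * A + d + 1) * (D ^ d * Λ) * W := by ring

lemma exists_norm_sum_ee_pow_le (d : ℕ) {ε : ℝ} (hε : 0 < ε) :
    ∃ C : ℝ, 0 < C ∧ ∀ (u : ℤ) (q : ℕ), [NeZero q] → IsCoprime u q → ∀ p : ℝ[X],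
      p.natDegree ≤ d + 2 → p.coeff (d + 2) = u / q → ∀ K : ℕ, [NeZero K] →
      ‖∑ k ∈ range K, ee (p.eval (k : ℝ))‖ ^ 2 ^ (d + 1) ≤
        C * (K : ℝ) ^ 2 ^ (d + 1) * (K * q : ℝ) ^ ε * weylFactor (d + 2) K q := by
  obtain ⟨C, hC, hdiv⟩ := exists_forall_card_divisors_le d hε
  set A : ℕ := (d + 1 + 1).factorial
  refine ⟨2 ^ 2 ^ (d + 1) * ((2 * A + d + 1) * (C * (1 + 1 / ε))), by positivity,
    fun u q _ hu p hp hlead K _ => ?_⟩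
  obtain ⟨D, hD1, hDC, hD⟩ := hdiv K NeZero.one_le
  have hK0 : (0 : ℝ) < K := by exact_mod_cast NeZero.pos K
  have hq1 : (1 : ℝ) ≤ q := by exact_mod_cast NeZero.one_le
  have : 0 ≤ Real.log q := Real.log_nonneg hq1
  have hR : 0 ≤ weylFactor (d + 2) K q := weylFactor_nonneg _ _ _
  have hDΛ : D ^ d * (1 + Real.log q) ≤ C * (1 + 1 / ε) * (K * q : ℝ) ^ ε :=
    calc D ^ d * (1 + Real.log q) ≤ (C * (K : ℝ) ^ ε) * ((1 + 1 / ε) * (q : ℝ) ^ ε) := by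
          gcongr
          exact one_add_log_le_mul_rpow hε hq1
      _ = C * (1 + 1 / ε) * (K * q : ℝ) ^ ε := by
          rw [Real.mul_rpow K.cast_nonneg q.cast_nonneg]
          ring
  have hdiff := norm_sum_ee_pow_mul_le_iterMulSum (d := d + 1) hp (le_refl K)
  rw [hlead] at hdiff
  refine le_of_mul_le_mul_right (hdiff.trans ?_) (pow_pos hK0 (d + 2))
  calc (2 * K : ℝ) ^ 2 ^ (d + 1) *
        iterMulSum K (fun m => maxGeomSum K (ee (A * (u / q) * m))) (d + 1) 1
      ≤ (2 * K : ℝ) ^ 2 ^ (d + 1) * ((2 * A + d + 1) * (C * (1 + 1 / ε) * (K * q : ℝ) ^ ε) *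
          (K ^ (d + 2) * weylFactor (d + 2) K q)) := by
        gcongr
        refine (iterMulSum_maxGeomSum_le hu d K (Nat.factorial_pos _) hD1 hD).trans ?_
        gcongr
    _ = 2 ^ 2 ^ (d + 1) * ((2 * A + d + 1) * (C * (1 + 1 / ε))) * (K : ℝ) ^ 2 ^ (d + 1) *
          (K * q : ℝ) ^ ε * weylFactor (d + 2) K q * K ^ (d + 2) := by
        ring

theorem exists_norm_sum_ee_le_of_weylFactor_le {n : ℕ} (hn : 2 ≤ n) {ε : ℝ} (hε : 0 < ε) :
    ∃ C : ℝ, 0 < C ∧ ∀ (u : ℤ) (q : ℕ), [NeZero q] → IsCoprime u q → ∀ p : ℝ[X],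
      p.natDegree ≤ n → p.coeff n = u / q → ∀ K : ℕ, [NeZero K] → ∀ R : ℝ, weylFactor n K q ≤ R →
      ‖∑ k ∈ range K, ee (p.eval (k : ℝ))‖ ≤
        C * K * (K * q : ℝ) ^ ε * R ^ (1 / 2 ^ (n - 1) : ℝ) := by
  obtain ⟨d, rfl⟩ := Nat.exists_eq_add_of_le' hn
  rw [show d + 2 - 1 = d + 1 from rfl]
  obtain ⟨C, hC, hpow⟩ := exists_norm_sum_ee_pow_le d hε
  refine ⟨C + 1, by positivity, fun u q _ hu p hp hlead K _ R hR => ?_⟩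
  have hN : 2 ^ (d + 1) ≠ 0 := pow_ne_zero _ two_ne_zero
  have hKq : (1 : ℝ) ≤ (K * q : ℝ) ^ ε := by
    refine Real.one_le_rpow ?_ hε.le
    exact_mod_cast Nat.mul_pos (NeZero.pos K) (NeZero.pos q)
  have hR0 : 0 ≤ R := (weylFactor_nonneg _ _ _).trans hR
  have hroot : (R ^ (1 / 2 ^ (d + 1) : ℝ)) ^ 2 ^ (d + 1) = R := by
    have := Real.rpow_inv_natCast_pow hR0 hN
    rwa [← one_div, Nat.cast_pow, Nat.cast_ofNat] at this
  refine le_of_pow_le_pow_left₀ hN (by positivity) ((hpow u q hu p hp hlead K).trans ?_)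
  rw [mul_pow, mul_pow, mul_pow, hroot]
  gcongr
  · exact weylFactor_nonneg _ _ _
  · exact (le_add_of_nonneg_right zero_le_one).trans (le_self_pow₀ (by linarith) hN)
  · exact le_self_pow₀ hKq hN

end WeylInequality

section SummationByParts

lemma sum_Ico_mul_eq_by_parts (w : ℕ → ℝ) (b : ℕ → ℂ) {A B : ℕ} (hAB : A ≤ B) :
    ∑ k ∈ Ico A B, (w k : ℂ) * b k =
      w B * ∑ k ∈ range B, b k - w A * ∑ k ∈ range A, b k +
        ∑ k ∈ Ico A B, ((w k - w (k + 1) : ℝ) : ℂ) * ∑ i ∈ range (k + 1), b i := by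
  induction B, hAB using Nat.le_induction with
  | base => simp
  | succ B hAB ih =>
    rw [sum_Ico_succ_top hAB, sum_Ico_succ_top hAB, ih, sum_range_succ b B]
    push_cast
    ring

lemma norm_sum_Ico_mul_le_by_parts (w : ℕ → ℝ) (b : ℕ → ℂ) {A B : ℕ} (hAB : A ≤ B) :
    ‖∑ k ∈ Ico A B, (w k : ℂ) * b k‖ ≤
      |w B| * ‖∑ k ∈ range B, b k‖ + |w A| * ‖∑ k ∈ range A, b k‖ +
        ∑ k ∈ Ico A B, |w k - w (k + 1)| * ‖∑ i ∈ range (k + 1), b i‖ := by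
  rw [sum_Ico_mul_eq_by_parts w b hAB]
  simp only [← Complex.norm_real, ← Real.norm_eq_abs, ← norm_mul]
  exact (norm_add_le _ _).trans (add_le_add (norm_sub_le _ _) (norm_sum_le _ _))

end SummationByParts

section Quasiperiodic

/-- The bound `θ (4x / (2 + θx))²` for `θ |1 + z + ⋯ + z^(M-1)|²` with `|z| = 1`, `θ = |z - 1|` and
`M ≤ x`. It interpolates between `θ x²` for small `x` and `1 / θ` for large `x`. -/
noncomputable def geomSqBound (θ x : ℝ) : ℝ := θ * (4 * x / (2 + θ * x)) ^ 2

lemma geomSqBound_nonneg {θ : ℝ} (hθ : 0 ≤ θ) (x : ℝ) : 0 ≤ geomSqBound θ x := by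
  unfold geomSqBound
  positivity

lemma geomSqBound_le_two_mul {θ x : ℝ} (hθ : 0 ≤ θ) (hx : 0 ≤ x) : geomSqBound θ x ≤ 2 * x := by
  have : 0 ≤ θ * x := mul_nonneg hθ hx
  rw [geomSqBound, div_pow, mul_div_assoc', div_le_iff₀ (by positivity)]
  nlinarith [mul_nonneg hx (sq_nonneg (2 - θ * x))]

lemma geomSqBound_le_div {θ x : ℝ} (hθ : 0 ≤ θ) (hx : 0 ≤ x) : geomSqBound θ x ≤ 16 / θ := by
  obtain rfl | hθ := hθ.eq_or_lt
  · simp [geomSqBound]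
  have hθx : 0 ≤ θ * x := mul_nonneg hθ.le hx
  rw [geomSqBound, div_pow, mul_div_assoc', div_le_div_iff₀ (by positivity) hθ]
  nlinarith

lemma norm_sub_one_mul_norm_sum_range_pow_sq_le {z : ℂ} (hz : ‖z‖ = 1) {M : ℕ} {x : ℝ}
    (hM : M ≤ x) :
    ‖z - 1‖ * ‖∑ k ∈ range M, z ^ k‖ ^ 2 ≤ geomSqBound ‖z - 1‖ x := by
  have hx : 0 ≤ x := M.cast_nonneg.trans hM
  have htriv : ‖∑ k ∈ range M, z ^ k‖ ≤ x := (norm_sum_range_pow_le hz M).trans hM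
  have hgeom := norm_sub_one_mul_norm_sum_range_pow_le hz M
  unfold geomSqBound
  gcongr
  rw [le_div_iff₀ (by positivity)]
  nlinarith

lemma geomSqBound_div_le {θ q : ℝ} (hθ : 0 ≤ θ) (hq : 0 < q) (k : ℕ) :
    geomSqBound θ ((k + 1) / q) / ((k + 1) * (k + 2)) ≤
      16 / q * (1 / (2 + k * (θ / q)) - 1 / (2 + (k + 1 : ℕ) * (θ / q))) := by
  set η := θ / q with hη
  have hη0 : 0 ≤ η := by positivity
  have hval : geomSqBound θ ((k + 1) / q) =
      16 / q * (η * (k + 1) ^ 2 / (2 + (k + 1) * η) ^ 2) := by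
    simp only [geomSqBound, hη]
    field_simp
    ring
  have hdiff : 1 / (2 + k * η) - 1 / (2 + (k + 1 : ℕ) * η) =
      η / ((2 + k * η) * (2 + (k + 1) * η)) := by
    push_cast
    field_simp
    ring
  have hden : (2 + k * η) * (2 + (k + 1) * η) ≤ (2 + (k + 1) * η) ^ 2 := by
    rw [sq]
    gcongr
    linarith
  have hsq : ((k : ℝ) + 1) ^ 2 ≤ (k + 1) * (k + 2) := by nlinarith
  rw [hval, hdiff, mul_div_assoc, div_div]
  gcongr 16 / q * ?_
  rw [div_le_div_iff₀ (by positivity) (by positivity)]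
  calc η * (k + 1) ^ 2 * ((2 + k * η) * (2 + (k + 1) * η))
      ≤ η * ((k + 1) * (k + 2)) * (2 + (k + 1) * η) ^ 2 := by gcongr
    _ = η * ((2 + (k + 1) * η) ^ 2 * ((k + 1) * (k + 2))) := by ring

lemma sum_range_geomSqBound_div_le {θ q : ℝ} (hθ : 0 ≤ θ) (hq : 0 < q) (T : ℕ) :
    ∑ k ∈ range T, geomSqBound θ ((k + 1) / q) / ((k + 1) * (k + 2)) ≤ 8 / q :=
  calc ∑ k ∈ range T, geomSqBound θ ((k + 1) / q) / ((k + 1) * (k + 2))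
      ≤ ∑ k ∈ range T, 16 / q * (1 / (2 + k * (θ / q)) - 1 / (2 + (k + 1 : ℕ) * (θ / q))) :=
        sum_le_sum fun k _ => geomSqBound_div_le hθ hq k
    _ = 16 / q * (1 / 2 - 1 / (2 + T * (θ / q))) := by
        rw [← mul_sum, sum_range_sub' fun k : ℕ => 1 / (2 + k * (θ / q))]
        simp only [Nat.cast_zero, zero_mul, add_zero]
    _ ≤ 16 / q * (1 / 2) := by
        gcongr
        exact sub_le_self _ (by positivity)
    _ = 8 / q := by ring

variable {a : ℤ → ℂ} {q : ℕ} {z : ℂ}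

lemma apply_add_mul_of_quasiperiodic (hper : ∀ k, a (k + q) = z * a k) (k : ℤ) (M : ℕ) :
    a (k + (q * M : ℕ)) = z ^ M * a k := by
  induction M with
  | zero => simp
  | succ M ih =>
    rw [mul_add_one, Nat.cast_add, ← add_assoc, hper, ih]
    ring

lemma sum_range_mul_of_quasiperiodic (hper : ∀ k, a (k + q) = z * a k) (M : ℕ) :
    ∑ k ∈ range (q * M), a k = (∑ m ∈ range M, z ^ m) * ∑ r ∈ range q, a r := by
  induction M with
  | zero => simp
  | succ M ih =>
    rw [mul_add_one, sum_range_add, ih, sum_range_succ _ M, add_mul]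
    congr 1
    rw [mul_sum]
    refine sum_congr rfl fun r _ => ?_
    rw [← apply_add_mul_of_quasiperiodic hper, Nat.cast_add, add_comm]

lemma pow_mul_sum_range_neg_of_quasiperiodic (hper : ∀ k, a (k + q) = z * a k) (M : ℕ) :
    z ^ M * ∑ k ∈ range (q * M), a (-(k + 1)) = ∑ k ∈ range (q * M), a k := by
  rw [mul_sum, ← sum_range_reflect (fun k : ℕ => z ^ M * a (-(k + 1)))]
  refine sum_congr rfl fun k hk => ?_
  rw [← apply_add_mul_of_quasiperiodic hper]
  have := mem_range.1 hk
  congr 1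
  omega

lemma norm_sum_range_mul_sub_neg_of_quasiperiodic (hz : ‖z‖ = 1)
    (hper : ∀ k, a (k + q) = z * a k) (M : ℕ) :
    ‖∑ k ∈ range (q * M), (a k - a (-(k + 1)))‖ =
      ‖z - 1‖ * ‖∑ m ∈ range M, z ^ m‖ ^ 2 * ‖∑ r ∈ range q, a r‖ := by
  have hrot : z ^ M * ∑ k ∈ range (q * M), (a k - a (-(k + 1))) =
      (z - 1) * (∑ m ∈ range M, z ^ m) ^ 2 * ∑ r ∈ range q, a r := by
    rw [sum_sub_distrib, mul_sub, pow_mul_sum_range_neg_of_quasiperiodic hper,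
      sum_range_mul_of_quasiperiodic hper]
    linear_combination (-(∑ m ∈ range M, z ^ m) * ∑ r ∈ range q, a r) * mul_geom_sum z M
  have := congrArg norm hrot
  rwa [norm_mul, norm_pow, hz, one_pow, one_mul, norm_mul, norm_mul, norm_pow] at this

lemma norm_sum_range_odd_le_of_quasiperiodic [NeZero q] (ha : ∀ k, ‖a k‖ ≤ 1) (hz : ‖z‖ = 1)
    (hper : ∀ k, a (k + q) = z * a k) (K : ℕ) :
    ‖∑ k ∈ range K, (a (k + 1) - a (-(k + 1)))‖ ≤
      geomSqBound ‖z - 1‖ (K / q) * ‖∑ r ∈ range q, a r‖ + 2 * q := by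
  have hdiff (k l : ℤ) : ‖a k - a l‖ ≤ 2 :=
    (norm_sub_le _ _).trans (by linarith [ha k, ha l])
  have hshift : ∑ k ∈ range K, (a (k + 1) - a (-(k + 1))) =
      ∑ k ∈ range K, (a k - a (-(k + 1))) + (a K - a 0) := by
    have := sum_range_sub (fun k : ℕ => a k) K
    push_cast at this
    rw [← this, ← sum_add_distrib]
    exact sum_congr rfl fun k _ => by ring
  have hblocks : ‖∑ k ∈ range (q * (K / q)), (a k - a (-(k + 1)))‖ ≤
      geomSqBound ‖z - 1‖ (K / q) * ‖∑ r ∈ range q, a r‖ := by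
    rw [norm_sum_range_mul_sub_neg_of_quasiperiodic hz hper]
    gcongr
    exact norm_sub_one_mul_norm_sum_range_pow_sq_le hz Nat.cast_div_le
  have hrest : ‖∑ i ∈ range (K % q), (a ↑(q * (K / q) + i) - a (-(↑(q * (K / q) + i) + 1)))‖ ≤
      2 * (K % q : ℕ) := by
    refine (norm_sum_le_of_le _ fun i _ => hdiff _ _).trans_eq ?_
    rw [sum_const, card_range, nsmul_eq_mul, mul_comm]
  have hmod : ((K % q : ℕ) : ℝ) + 1 ≤ q := by exact_mod_cast Nat.mod_lt K (NeZero.pos q)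
  rw [hshift]
  conv_lhs => rw [← Nat.div_add_mod K q, sum_range_add, Nat.div_add_mod K q]
  refine (norm_add₃_le).trans ?_
  linarith [hdiff K 0]

lemma inv_succ_sub_inv_succ_succ (k : ℕ) :
    1 / ((k : ℝ) + 1) - 1 / ((k + 1 : ℕ) + 1) = 1 / ((k + 1) * (k + 2)) := by
  push_cast
  field_simp
  ring

lemma inv_succ_mul_norm_sum_range_odd_le_of_quasiperiodic [NeZero q] (ha : ∀ k, ‖a k‖ ≤ 1)
    (hz : ‖z‖ = 1) (hper : ∀ k, a (k + q) = z * a k) (K : ℕ) :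
    1 / (K + 1) * ‖∑ k ∈ range K, (a (k + 1) - a (-(k + 1)))‖ ≤
      2 * (‖∑ r ∈ range q, a r‖ / q) + 2 * q * (1 / (K + 1)) := by
  set S := ‖∑ r ∈ range q, a r‖
  have hK : K * (1 / (K + 1 : ℝ)) ≤ 1 := by
    rw [mul_one_div, div_le_one (by positivity)]
    linarith
  calc 1 / (K + 1) * ‖∑ k ∈ range K, (a (k + 1) - a (-(k + 1)))‖
      ≤ 1 / (K + 1) * (2 * (K / q) * S + 2 * q) := by
        gcongr
        refine (norm_sum_range_odd_le_of_quasiperiodic ha hz hper K).trans ?_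
        gcongr
        exact geomSqBound_le_two_mul (norm_nonneg _) (by positivity)
    _ = 2 * (S / q) * (K * (1 / (K + 1))) + 2 * q * (1 / (K + 1)) := by ring
    _ ≤ 2 * (S / q) * 1 + 2 * q * (1 / (K + 1)) := by gcongr
    _ = 2 * (S / q) + 2 * q * (1 / (K + 1)) := by rw [mul_one]

lemma sum_Ico_inv_mul_norm_sum_range_odd_le_of_quasiperiodic [NeZero q] (ha : ∀ k, ‖a k‖ ≤ 1)
    (hz : ‖z‖ = 1) (hper : ∀ k, a (k + q) = z * a k) {A B : ℕ} (hAB : A ≤ B) :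
    ∑ k ∈ Ico A B, 1 / ((k + 1) * (k + 2)) *
        ‖∑ i ∈ range (k + 1), (a (i + 1) - a (-(i + 1)))‖ ≤
      8 * (‖∑ r ∈ range q, a r‖ / q) + 2 * q * (1 / (A + 1) - 1 / (B + 1)) := by
  set S := ‖∑ r ∈ range q, a r‖
  have htelescope : ∑ k ∈ Ico A B, 1 / (((k : ℝ) + 1) * (k + 2)) = 1 / (A + 1) - 1 / (B + 1) := by
    simp only [← inv_succ_sub_inv_succ_succ]
    rw [← neg_sub (1 / ((B : ℝ) + 1)), ← sum_Ico_sub (fun k : ℕ => 1 / ((k : ℝ) + 1)) hAB,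
      ← sum_neg_distrib]
    simp only [neg_sub]
  calc ∑ k ∈ Ico A B, 1 / ((k + 1) * (k + 2)) *
        ‖∑ i ∈ range (k + 1), (a (i + 1) - a (-(i + 1)))‖
      ≤ ∑ k ∈ Ico A B, (S * (geomSqBound ‖z - 1‖ ((k + 1) / q) / ((k + 1) * (k + 2))) +
          2 * q * (1 / ((k + 1) * (k + 2)))) := by
        refine sum_le_sum fun k _ => ?_
        have hpartial := norm_sum_range_odd_le_of_quasiperiodic ha hz hper (k + 1)
        refine (mul_le_mul_of_nonneg_left hpartial (by positivity)).trans_eq ?_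
        push_cast
        ring
    _ = S * ∑ k ∈ Ico A B, geomSqBound ‖z - 1‖ ((k + 1) / q) / ((k + 1) * (k + 2)) +
          2 * q * (1 / (A + 1) - 1 / (B + 1)) := by
        rw [sum_add_distrib, ← mul_sum, ← mul_sum, htelescope]
    _ ≤ S * (8 / q) + 2 * q * (1 / (A + 1) - 1 / (B + 1)) := by
        gcongr
        refine le_trans ?_ (sum_range_geomSqBound_div_le (norm_nonneg (z - 1))
          (Nat.cast_pos.2 (NeZero.pos q)) B)
        refine sum_le_sum_of_subset_of_nonneg (fun k hk => ?_) fun k _ _ => ?_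
        · exact mem_range.2 (mem_Ico.1 hk).2
        · exact div_nonneg (geomSqBound_nonneg (norm_nonneg _) _) (by positivity)
    _ = 8 * (S / q) + 2 * q * (1 / (A + 1) - 1 / (B + 1)) := by ring

lemma norm_sum_Ico_odd_div_le_of_quasiperiodic [NeZero q] (ha : ∀ k, ‖a k‖ ≤ 1) (hz : ‖z‖ = 1)
    (hper : ∀ k, a (k + q) = z * a k) {A B : ℕ} (hAB : A ≤ B) :
    ‖∑ k ∈ Ico A B, ((1 / (k + 1) : ℝ) : ℂ) * (a (k + 1) - a (-(k + 1)))‖ ≤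
      12 * (‖∑ r ∈ range q, a r‖ / q) + 4 * (q / (A + 1)) := by
  have hboundary := inv_succ_mul_norm_sum_range_odd_le_of_quasiperiodic ha hz hper
  have hinterior := sum_Ico_inv_mul_norm_sum_range_odd_le_of_quasiperiodic ha hz hper hAB
  have hparts := norm_sum_Ico_mul_le_by_parts (fun k : ℕ => 1 / ((k : ℝ) + 1))
    (fun k : ℕ => a (k + 1) - a (-(k + 1))) hAB
  have hpos (k : ℕ) : 0 ≤ 1 / ((k : ℝ) + 1) := by positivity
  have hpos' (k : ℕ) : 0 ≤ 1 / (((k : ℝ) + 1) * (k + 2)) := by positivity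
  simp only [inv_succ_sub_inv_succ_succ, abs_of_nonneg (hpos _), abs_of_nonneg (hpos' _)] at hparts
  have hA : 2 * q * (1 / ((A : ℝ) + 1)) + 2 * q * (1 / (A + 1)) = 4 * (q / (A + 1)) := by ring
  linarith [hboundary A, hboundary B]

lemma exists_tendsto_sum_Ico_odd_div_of_quasiperiodic [NeZero q] (ha : ∀ k, ‖a k‖ ≤ 1)
    (hz : ‖z‖ = 1) (hper : ∀ k, a (k + q) = z * a k) (A : ℕ) :
    ∃ L : ℂ, Tendsto (fun K => ∑ k ∈ Ico A K, ((1 / (k + 1) : ℝ) : ℂ) *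
        (a (k + 1) - a (-(k + 1)))) atTop (nhds L) ∧
      ‖L‖ ≤ 12 * (‖∑ r ∈ range q, a r‖ / q) + 4 * (q / (A + 1)) := by
  have hanti : Antitone fun k : ℕ => 1 / ((k : ℝ) + 1) := fun i j hij => by
    dsimp only
    gcongr
  have hbdd (K : ℕ) : ‖∑ k ∈ range K, (a (k + 1) - a (-(k + 1)))‖ ≤
      16 / ‖z - 1‖ * ‖∑ r ∈ range q, a r‖ + 2 * q := by
    refine (norm_sum_range_odd_le_of_quasiperiodic ha hz hper K).trans ?_
    gcongr
    exact geomSqBound_le_div (norm_nonneg _) (by positivity)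
  obtain ⟨L, hL⟩ := cauchySeq_tendsto_of_complete
    (hanti.cauchySeq_series_mul_of_tendsto_zero_of_bounded
      tendsto_one_div_add_atTop_nhds_zero_nat hbdd)
  have hlim : Tendsto (fun K => ∑ k ∈ Ico A K, ((1 / (k + 1) : ℝ) : ℂ) *
      (a (k + 1) - a (-(k + 1)))) atTop
      (nhds (L - ∑ k ∈ range A, ((1 / (k + 1) : ℝ) : ℂ) * (a (k + 1) - a (-(k + 1))))) := by
    refine (hL.sub_const _).congr' ((eventually_ge_atTop A).mono fun K hK => ?_)
    simp only [sum_Ico_eq_sub _ hK, Complex.real_smul]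
  refine ⟨_, hlim, le_of_tendsto hlim.norm ((eventually_ge_atTop A).mono fun K hK => ?_)⟩
  exact norm_sum_Ico_odd_div_le_of_quasiperiodic ha hz hper hK

end Quasiperiodic

open scoped NNReal

/-- A Lipschitz function on the line which is `1` on `[-1/2, 1/2]` and `0` outside `(-2, 2)`,
playing the role of the smooth cutoff `φ`. -/
structure IsLipschitzCutoff (M : ℝ≥0) (φ : ℝ → ℝ) : Prop where
  lipschitz : LipschitzWith M φ
  eq_one : ∀ x, |x| ≤ 1 / 2 → φ x = 1
  eq_zero : ∀ x, 2 ≤ |x| → φ x = 0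

lemma GoodPhi.exists_isLipschitzCutoff {φ : ℝ → ℝ} (hφ : GoodPhi φ) :
    ∃ M, IsLipschitzCutoff M φ := by
  have hsupp : HasCompactSupport φ :=
    .intro (isCompact_Icc (a := (-2 : ℝ)) (b := 2)) fun x hx =>
      hφ.2.2.1 x (le_of_not_ge fun h => hx (abs_le.1 h))
  obtain ⟨M, hM⟩ := ContDiff.lipschitzWith_of_hasCompactSupport hsupp hφ.1 (by simp)
  exact ⟨M, hM, hφ.2.1, hφ.2.2.1⟩

/-- The weight `(1 - φ(jδ)) / j` of the frequency `j = k + 1` in the part of the series which `φ`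
cuts off. -/
noncomputable def tailWeight (φ : ℝ → ℝ) (δ : ℝ) (k : ℕ) : ℝ := (1 - φ ((k + 1) * δ)) / (k + 1)

namespace IsLipschitzCutoff

variable {M : ℝ≥0} {φ : ℝ → ℝ} {δ : ℝ}

lemma comp_neg (hφ : IsLipschitzCutoff M φ) : IsLipschitzCutoff M fun x => φ (-x) where
  lipschitz := .of_dist_le_mul fun x y => by
    simpa only [dist_neg_neg] using hφ.lipschitz.dist_le_mul (-x) (-y)
  eq_one x hx := hφ.eq_one _ (by rwa [abs_neg])
  eq_zero x hx := hφ.eq_zero _ (by rwa [abs_neg])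

lemma abs_sub_le (hφ : IsLipschitzCutoff M φ) (x y : ℝ) : |φ x - φ y| ≤ M * |x - y| := by
  simpa only [Real.dist_eq] using hφ.lipschitz.dist_le_mul x y

lemma abs_one_sub_le (hφ : IsLipschitzCutoff M φ) (x : ℝ) : |1 - φ x| ≤ 2 * M + 1 := by
  have : (0 : ℝ) ≤ M := M.coe_nonneg
  rcases le_total 2 |x| with hx | hx
  · rw [hφ.eq_zero x hx, sub_zero, abs_one]
    linarith
  · have h := hφ.abs_sub_le 0 x
    rw [hφ.eq_one 0 (by norm_num), zero_sub, abs_neg] at h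
    nlinarith

lemma tailWeight_eq_zero (hφ : IsLipschitzCutoff M φ) (hδ : 0 ≤ δ) {k : ℕ}
    (hk : (k + 1) * δ ≤ 1 / 2) : tailWeight φ δ k = 0 := by
  rw [tailWeight, hφ.eq_one _ (by rwa [abs_of_nonneg (by positivity)]), sub_self, zero_div]

lemma tailWeight_eq_inv (hφ : IsLipschitzCutoff M φ) {k : ℕ} (hk : 2 ≤ (k + 1) * δ) :
    tailWeight φ δ k = 1 / (k + 1) := by
  rw [tailWeight, hφ.eq_zero _ (hk.trans (le_abs_self _)), sub_zero]

lemma abs_tailWeight_le (hφ : IsLipschitzCutoff M φ) (k : ℕ) :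
    |tailWeight φ δ k| ≤ (4 * M + 1) / (k + 1) := by
  rw [tailWeight, abs_div, abs_of_pos (a := (k : ℝ) + 1) (by positivity)]
  gcongr
  linarith [hφ.abs_one_sub_le ((k + 1) * δ), M.coe_nonneg]

lemma abs_sub_succ_le (hφ : IsLipschitzCutoff M φ) (hδ : 0 < δ) (k : ℕ) :
    |φ ((k + 2) * δ) - φ ((k + 1) * δ)| ≤ 2 * M / (k + 1) := by
  rcases le_total 2 ((k + 1) * δ) with hk | hk
  · have hk' : 2 ≤ (k + 2) * δ := by linarith
    rw [hφ.eq_zero _ (hk.trans (le_abs_self _)), hφ.eq_zero _ (hk'.trans (le_abs_self _)),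
      sub_self, abs_zero]
    positivity
  · have hstep : ((k : ℝ) + 2) * δ - (k + 1) * δ = δ := by ring
    refine (hφ.abs_sub_le _ _).trans ?_
    rw [hstep, abs_of_pos hδ, le_div_iff₀ (by positivity)]
    nlinarith [M.coe_nonneg]

lemma abs_tailWeight_sub_le (hφ : IsLipschitzCutoff M φ) (hδ : 0 < δ) (k : ℕ) :
    |tailWeight φ δ k - tailWeight φ δ (k + 1)| ≤ (4 * M + 1) / (k + 1) ^ 2 := by
  have hsplit : tailWeight φ δ k - tailWeight φ δ (k + 1) =
      (1 - φ ((k + 1) * δ)) / ((k + 1) * (k + 2)) +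
        (φ ((k + 2) * δ) - φ ((k + 1) * δ)) / (k + 2) := by
    have hcast : ((k + 1 : ℕ) : ℝ) + 1 = k + 2 := by push_cast; ring
    simp only [tailWeight, hcast]
    field_simp
    ring
  rw [hsplit]
  refine (abs_add_le _ _).trans ?_
  rw [abs_div, abs_div, abs_of_pos (a := ((k : ℝ) + 1) * (k + 2)) (by positivity),
    abs_of_pos (a := (k : ℝ) + 2) (by positivity)]
  calc |1 - φ ((k + 1) * δ)| / ((k + 1) * (k + 2)) +
        |φ ((k + 2) * δ) - φ ((k + 1) * δ)| / (k + 2)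
      ≤ (2 * M + 1) / ((k + 1) * (k + 1)) + 2 * M / (k + 1) / (k + 1) := by
        gcongr
        · exact hφ.abs_one_sub_le _
        · norm_num
        · exact hφ.abs_sub_succ_le hδ k
        · norm_num
    _ = (4 * M + 1) / (k + 1) ^ 2 := by
        field_simp
        ring

end IsLipschitzCutoff

lemma norm_sum_range_mul_le_log {w : ℕ → ℝ} {a : ℕ → ℂ} {B Y : ℝ} {m₀ M : ℕ}
    (hw : ∀ k, |w k| ≤ B / (k + 1)) (hdiff : ∀ k, |w k - w (k + 1)| ≤ B / (k + 1) ^ 2)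
    (hzero : ∀ k < m₀, w k = 0) (hY : 0 ≤ Y)
    (ha : ∀ m, m₀ ≤ m → m ≤ M → ‖∑ k ∈ range m, a k‖ ≤ m * Y) :
    ‖∑ k ∈ range M, (w k : ℂ) * a k‖ ≤ B * Y * (2 + Real.log M) := by
  have hB : 0 ≤ B := by simpa using (abs_nonneg _).trans (hw 0)
  have hboundary : |w M| * ‖∑ k ∈ range M, a k‖ ≤ B * Y := by
    rcases lt_or_ge M m₀ with hM | hM
    · rw [hzero M hM, abs_zero, zero_mul]
      positivity
    · calc |w M| * ‖∑ k ∈ range M, a k‖ ≤ B / (M + 1) * (M * Y) := by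
            gcongr
            exacts [hw M, ha M hM le_rfl]
        _ = B * Y * (M / (M + 1)) := by ring
        _ ≤ B * Y * 1 := by
            gcongr
            rw [div_le_one (by positivity)]
            linarith
        _ = B * Y := mul_one _
  have hinterior : ∀ k ∈ range M, |w k - w (k + 1)| * ‖∑ i ∈ range (k + 1), a i‖ ≤
      B * Y * (1 / (k + 1)) := fun k hk => by
    rcases lt_or_ge (k + 1) m₀ with hkm | hkm
    · rw [hzero k (by omega), hzero (k + 1) hkm, sub_zero, abs_zero, zero_mul]
      positivity
    · calc |w k - w (k + 1)| * ‖∑ i ∈ range (k + 1), a i‖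
          ≤ B / (k + 1) ^ 2 * ((k + 1 : ℕ) * Y) := by
            gcongr
            exacts [hdiff k, ha _ hkm (mem_range.1 hk)]
        _ = B * Y * (1 / (k + 1)) := by
            push_cast
            field_simp
  have hparts := norm_sum_Ico_mul_le_by_parts w a M.zero_le
  rw [range_zero, sum_empty, norm_zero, mul_zero, add_zero, ← range_eq_Ico] at hparts
  calc ‖∑ k ∈ range M, (w k : ℂ) * a k‖
      ≤ B * Y + ∑ k ∈ range M, B * Y * (1 / (k + 1 : ℝ)) :=
        hparts.trans (add_le_add hboundary (sum_le_sum hinterior))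
    _ ≤ B * Y + B * Y * (1 + Real.log M) := by
        rw [← mul_sum]
        gcongr
        exact sum_inv_succ_le_one_add_log M
    _ = B * Y * (2 + Real.log M) := by ring

section WeylSums

open Polynomial

variable {n q : ℕ} {δ : ℝ}

/-- The oscillating factor `e(t k^n + y k)` of the frequency `k`. -/
noncomputable def phase (n : ℕ) (t y : ℝ) (k : ℤ) : ℂ := ee (t * (k : ℝ) ^ n + y * k)

lemma norm_phase (n : ℕ) (t y : ℝ) (k : ℤ) : ‖phase n t y k‖ = 1 := norm_ee _

lemma phase_neg (n : ℕ) (t y : ℝ) (k : ℤ) : phase n t y (-k) = phase n ((-1) ^ n * t) (-y) k := by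
  simp only [phase, Int.cast_neg, neg_pow (k : ℝ)]
  ring_nf

lemma phase_add_natCast [NeZero q] (u : ℤ) (y : ℝ) (k : ℤ) :
    phase n (u / q) y (k + q) = ee (y * q) * phase n (u / q) y k := by
  have hq : (q : ℝ) ≠ 0 := NeZero.ne _
  obtain ⟨c, hc⟩ : (q : ℤ) ∣ (k + q) ^ n - k ^ n := by
    simpa only [add_sub_cancel_left] using sub_dvd_pow_sub_pow (k + q : ℤ) k n
  have hpow : ((k : ℝ) + q) ^ n = k ^ n + q * c := by
    exact_mod_cast sub_eq_iff_eq_add'.1 hc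
  rw [phase, phase, ← ee_add, ← ee_add_intCast (y * q + _) (u * c)]
  push_cast
  rw [hpow]
  field_simp
  ring_nf

/-- The polynomial `t X^n + y X` whose values on the integers are the arguments of `phase`. -/
noncomputable def phasePoly (n : ℕ) (t y : ℝ) : ℝ[X] := C t * X ^ n + C y * X

lemma ee_eval_phasePoly (n : ℕ) (t y : ℝ) (k : ℕ) :
    ee ((phasePoly n t y).eval (k : ℝ)) = phase n t y k := by
  simp [phasePoly, phase]

lemma ee_eval_taylor_phasePoly (n : ℕ) (t y : ℝ) (k : ℕ) :
    ee ((taylor 1 (phasePoly n t y)).eval (k : ℝ)) = phase n t y (k + 1) := by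
  simp [phasePoly, phase]

lemma natDegree_phasePoly_le (hn : 1 ≤ n) (t y : ℝ) : (phasePoly n t y).natDegree ≤ n :=
  natDegree_add_le_of_degree_le (natDegree_C_mul_X_pow_le t n)
    ((natDegree_C_mul_le y X).trans (natDegree_X_le.trans hn))

lemma coeff_phasePoly (hn : 2 ≤ n) (t y : ℝ) : (phasePoly n t y).coeff n = t := by
  rw [phasePoly, coeff_add, coeff_C_mul_X_pow, if_pos rfl,
    coeff_C_mul, coeff_X_of_ne_one (by omega), mul_zero, add_zero]

lemma inv_le_of_one_le_mul_pow [NeZero q] (hn : 2 ≤ n) (hδ : 0 < δ) (hqδ : 1 ≤ q * δ ^ (n - 1)) :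
    1 / (q : ℝ) ≤ δ := by
  have hq : (1 : ℝ) ≤ q := by exact_mod_cast NeZero.one_le
  rw [div_le_iff₀' (by positivity)]
  rcases le_total δ 1 with h | h
  · exact hqδ.trans (by gcongr; exact pow_le_of_le_one hδ.le h (by omega))
  · nlinarith

lemma le_mul_pow_of_one_le_mul_pow (hn : 2 ≤ n) (hδ : 0 < δ) (hqδ : 1 ≤ q * δ ^ (n - 1)) :
    δ ≤ q * δ ^ n := by
  obtain ⟨m, rfl⟩ := Nat.exists_eq_add_of_le' (one_le_two.trans hn)
  rw [pow_succ, ← mul_assoc]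
  exact le_mul_of_one_le_left hδ.le hqδ

lemma weylFactor_self_le [NeZero q] (hn : 2 ≤ n) (hδ : 0 < δ) (hqδ : 1 ≤ q * δ ^ (n - 1)) :
    weylFactor n q q ≤ 3 * (q * δ ^ n) := by
  have hq : (1 : ℝ) ≤ q := by exact_mod_cast NeZero.one_le
  have hinv := (inv_le_of_one_le_mul_pow hn hδ hqδ).trans (le_mul_pow_of_one_le_mul_pow hn hδ hqδ)
  have hpow : q / (q : ℝ) ^ n ≤ 1 / q := by
    rw [div_le_div_iff₀ (by positivity) (by positivity), ← sq, one_mul]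
    exact pow_le_pow_right₀ hq hn
  unfold weylFactor
  linarith

lemma weylFactor_le_of_lt_succ_mul [NeZero q] (hn : 2 ≤ n) (hδ : 0 < δ)
    (hqδ : 1 ≤ q * δ ^ (n - 1)) {m : ℕ} [NeZero m] (hm : 1 / 2 < (m + 1) * δ) :
    weylFactor n m q ≤ 4 ^ (n + 1) * (q * δ ^ n) := by
  have hδQ := le_mul_pow_of_one_le_mul_pow hn hδ hqδ
  have hm1 : (1 : ℝ) ≤ m := by exact_mod_cast NeZero.one_le
  have hinv : 1 / (m : ℝ) ≤ 4 * δ := by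
    rw [div_le_iff₀ (by positivity)]
    nlinarith
  have hpow : q / (m : ℝ) ^ n ≤ 4 ^ n * (q * δ ^ n) :=
    calc q / (m : ℝ) ^ n = q * (1 / (m : ℝ)) ^ n := by
          rw [one_div, inv_pow, div_eq_mul_inv]
      _ ≤ q * (4 * δ) ^ n := by gcongr
      _ = 4 ^ n * (q * δ ^ n) := by ring
  have hfour : (4 : ℝ) ^ 2 ≤ 4 ^ n := pow_le_pow_right₀ (by norm_num) hn
  calc weylFactor n m q ≤ 4 * (q * δ ^ n) + q * δ ^ n + 4 ^ n * (q * δ ^ n) :=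
        add_le_add (add_le_add (by linarith)
          ((inv_le_of_one_le_mul_pow hn hδ hqδ).trans hδQ)) hpow
    _ = (5 + 4 ^ n) * (q * δ ^ n) := by ring
    _ ≤ 4 ^ (n + 1) * (q * δ ^ n) := by
        gcongr
        rw [pow_succ]
        linarith

lemma exists_norm_sum_phase_div_le (hn : 2 ≤ n) {ε : ℝ} (hε : 0 < ε) :
    ∃ C : ℝ, 0 < C ∧ ∀ (u : ℤ) (q : ℕ), [NeZero q] → IsCoprime u q → ∀ δ : ℝ, 0 < δ →
      1 ≤ q * δ ^ (n - 1) → ∀ y : ℝ,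
      ‖∑ k ∈ range q, phase n (u / q) y k‖ / q ≤
        C * (q * δ ^ n) ^ (1 / 2 ^ (n - 1) : ℝ) * (q : ℝ) ^ ε := by
  obtain ⟨C, hC, hweyl⟩ := exists_norm_sum_ee_le_of_weylFactor_le hn (half_pos hε)
  refine ⟨C * 3 ^ (1 / 2 ^ (n - 1) : ℝ), by positivity, fun u q _ hu δ hδ hqδ y => ?_⟩
  have hq : (0 : ℝ) < q := by exact_mod_cast NeZero.pos q
  have h := hweyl u q hu _ (natDegree_phasePoly_le (by omega) _ y) (coeff_phasePoly hn _ y) q _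
    (weylFactor_self_le hn hδ hqδ)
  have hsq : (q * q : ℝ) ^ (ε / 2) = (q : ℝ) ^ ε := by
    rw [← sq, ← Real.rpow_natCast, ← Real.rpow_mul hq.le, Nat.cast_ofNat,
      mul_div_cancel₀ ε two_ne_zero]
  simp only [ee_eval_phasePoly] at h
  rw [hsq, Real.mul_rpow (by norm_num) (by positivity)] at h
  rw [div_le_iff₀ hq]
  exact h.trans_eq (by ring)

lemma exists_norm_sum_phase_succ_le (hn : 2 ≤ n) {ε : ℝ} (hε : 0 < ε) :
    ∃ C : ℝ, 0 < C ∧ ∀ (u : ℤ) (q : ℕ), [NeZero q] → IsCoprime u q → ∀ δ : ℝ, 0 < δ →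
      1 ≤ q * δ ^ (n - 1) → ∀ (y : ℝ) (m : ℕ), m ≤ q ^ 2 → 1 / 2 < (m + 1) * δ →
      ‖∑ k ∈ range m, phase n (u / q) y (k + 1)‖ ≤
        m * (C * (q * δ ^ n) ^ (1 / 2 ^ (n - 1) : ℝ) * (q : ℝ) ^ ε) := by
  obtain ⟨C, hC, hweyl⟩ := exists_norm_sum_ee_le_of_weylFactor_le hn (ε := ε / 3) (by positivity)
  refine ⟨C * (4 ^ (n + 1)) ^ (1 / 2 ^ (n - 1) : ℝ), by positivity,
    fun u q _ hu δ hδ hqδ y m hmq hm => ?_⟩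
  obtain rfl | hm0 := m.eq_zero_or_pos
  · simp
  have : NeZero m := ⟨hm0.ne'⟩
  have h := hweyl u q hu (taylor 1 (phasePoly n (u / q) y))
    (by rw [natDegree_taylor]; exact natDegree_phasePoly_le (by omega) _ y)
    (by rw [coeff_taylor_of_natDegree_le (natDegree_phasePoly_le (by omega) _ y),
      coeff_phasePoly hn]) m _ (weylFactor_le_of_lt_succ_mul hn hδ hqδ hm)
  simp only [ee_eval_taylor_phasePoly] at h
  rw [Real.mul_rpow (x := 4 ^ (n + 1)) (by positivity) (by positivity)] at h
  have hmq3 : (m * q : ℝ) ^ (ε / 3) ≤ (q : ℝ) ^ ε :=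
    calc (m * q : ℝ) ^ (ε / 3) ≤ ((q : ℝ) ^ 3) ^ (ε / 3) := by
          gcongr
          exact_mod_cast Nat.mul_le_mul_right q hmq
      _ = (q : ℝ) ^ ε := by
          rw [← Real.rpow_natCast, ← Real.rpow_mul q.cast_nonneg, Nat.cast_ofNat,
            mul_div_cancel₀ ε three_ne_zero]
  refine h.trans ?_
  calc C * m * (m * q : ℝ) ^ (ε / 3) *
        ((4 ^ (n + 1)) ^ (1 / 2 ^ (n - 1) : ℝ) * (q * δ ^ n) ^ (1 / 2 ^ (n - 1) : ℝ))
      ≤ C * m * (q : ℝ) ^ ε *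
        ((4 ^ (n + 1)) ^ (1 / 2 ^ (n - 1) : ℝ) * (q * δ ^ n) ^ (1 / 2 ^ (n - 1) : ℝ)) := by
        gcongr
    _ = m * (C * (4 ^ (n + 1)) ^ (1 / 2 ^ (n - 1) : ℝ) *
          (q * δ ^ n) ^ (1 / 2 ^ (n - 1) : ℝ) * (q : ℝ) ^ ε) := by
        ring

lemma exists_norm_sum_tailWeight_mul_phase_le (hn : 2 ≤ n) {ε : ℝ} (hε : 0 < ε) (M : ℝ≥0) :
    ∃ C : ℝ, 0 < C ∧ ∀ φ, IsLipschitzCutoff M φ → ∀ (u : ℤ) (q : ℕ), [NeZero q] → IsCoprime u q →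
      ∀ δ : ℝ, 0 < δ → 1 ≤ q * δ ^ (n - 1) → ∀ y : ℝ,
      ‖∑ k ∈ range (q ^ 2), (tailWeight φ δ k : ℂ) * phase n (u / q) y (k + 1)‖ ≤
        C * (q * δ ^ n) ^ (1 / 2 ^ (n - 1) : ℝ) * (q : ℝ) ^ ε := by
  obtain ⟨C, hC, hphase⟩ := exists_norm_sum_phase_succ_le hn (half_pos hε)
  refine ⟨(4 * M + 1) * C * (2 * (1 + 1 / (ε / 2))), by positivity,
    fun φ hφ u q _ hu δ hδ hqδ y => ?_⟩
  have hq : (1 : ℝ) ≤ q := by exact_mod_cast NeZero.one_le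
  set Y := C * (q * δ ^ n) ^ (1 / 2 ^ (n - 1) : ℝ) * (q : ℝ) ^ (ε / 2)
  have hzero (k : ℕ) (hk : k < ⌊1 / (2 * δ)⌋₊) : tailWeight φ δ k = 0 := by
    refine hφ.tailWeight_eq_zero hδ.le ?_
    have h := (Nat.le_floor_iff (by positivity)).1 (Nat.succ_le_of_lt hk)
    rw [le_div_iff₀ (by positivity)] at h
    push_cast at h
    linarith
  have hsum (m : ℕ) (hm : ⌊1 / (2 * δ)⌋₊ ≤ m) (hmq : m ≤ q ^ 2) :
      ‖∑ k ∈ range m, phase n (u / q) y (k + 1)‖ ≤ m * Y := by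
    refine hphase u q hu δ hδ hqδ y m hmq ?_
    have h := Nat.lt_of_floor_lt (Nat.lt_succ_of_le hm)
    rw [div_lt_iff₀ (by positivity)] at h
    push_cast at h
    linarith
  have hlog : 2 + Real.log (q ^ 2 : ℕ) ≤ 2 * ((1 + 1 / (ε / 2)) * (q : ℝ) ^ (ε / 2)) := by
    rw [Nat.cast_pow, Real.log_pow, Nat.cast_ofNat]
    linarith [one_add_log_le_mul_rpow (half_pos hε) hq]
  have hhalves : (q : ℝ) ^ (ε / 2) * (q : ℝ) ^ (ε / 2) = (q : ℝ) ^ ε := by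
    rw [← Real.rpow_add (by positivity), add_halves]
  calc ‖∑ k ∈ range (q ^ 2), (tailWeight φ δ k : ℂ) * phase n (u / q) y (k + 1)‖
      ≤ (4 * M + 1) * Y * (2 + Real.log (q ^ 2 : ℕ)) :=
        norm_sum_range_mul_le_log hφ.abs_tailWeight_le (hφ.abs_tailWeight_sub_le hδ) hzero
          (by positivity) hsum
    _ ≤ (4 * M + 1) * Y * (2 * ((1 + 1 / (ε / 2)) * (q : ℝ) ^ (ε / 2))) := by gcongr
    _ = (4 * M + 1) * C * (2 * (1 + 1 / (ε / 2))) * (q * δ ^ n) ^ (1 / 2 ^ (n - 1) : ℝ) *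
          ((q : ℝ) ^ (ε / 2) * (q : ℝ) ^ (ε / 2)) := by ring
    _ = (4 * M + 1) * C * (2 * (1 + 1 / (ε / 2))) * (q * δ ^ n) ^ (1 / 2 ^ (n - 1) : ℝ) *
          (q : ℝ) ^ ε := by rw [hhalves]

end WeylSums

section HighFrequencies

variable {φ : ℝ → ℝ} {δ : ℝ} {n : ℕ}

/-- The symmetric partial sums of the part of `∑ e(t k^n + y k) / k` cut off by `φ` at scale
`1 / δ`. The term `k = 0` vanishes since `x / 0 = 0`. -/
noncomputable def highFreqSum (φ : ℝ → ℝ) (δ : ℝ) (n : ℕ) (t y : ℝ) (K : ℕ) : ℂ :=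
  ∑ k ∈ Icc (-(K : ℤ)) K, (((1 - φ (k * δ)) / k : ℝ) : ℂ) * phase n t y k

lemma highFreqSum_eq_sum_range (φ : ℝ → ℝ) (δ : ℝ) (n : ℕ) (t y : ℝ) (K : ℕ) :
    highFreqSum φ δ n t y K = ∑ k ∈ range K, ((tailWeight φ δ k : ℂ) * phase n t y (k + 1) -
      (tailWeight (fun x => φ (-x)) δ k : ℂ) * phase n t y (-(k + 1))) := by
  induction K with
  | zero => simp [highFreqSum]
  | succ K ih =>
    have hneg : ((1 - φ ((-(K + 1) : ℤ) * δ)) / (-(K + 1) : ℤ) : ℝ) =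
        -tailWeight (fun x => φ (-x)) δ K := by
      push_cast
      rw [tailWeight, neg_mul, div_neg]
    have hpos : ((1 - φ ((K + 1 : ℤ) * δ)) / (K + 1 : ℤ) : ℝ) = tailWeight φ δ K := by
      push_cast
      rw [tailWeight]
    rw [sum_range_succ, ← ih, highFreqSum, Nat.cast_succ, sum_Icc_succ_eq_add_endpoints, hneg, hpos,
      highFreqSum]
    push_cast
    ring

lemma highFreqSum_eq_add_sum_Ico {M : ℝ≥0} (hφ : IsLipschitzCutoff M φ) (hδ : 0 < δ) (n : ℕ)
    (t y : ℝ) {A K : ℕ} (hAK : A ≤ K) (hA : 2 ≤ (A + 1) * δ) :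
    highFreqSum φ δ n t y K = highFreqSum φ δ n t y A +
      ∑ k ∈ Ico A K, ((1 / (k + 1) : ℝ) : ℂ) *
        (phase n t y (k + 1) - phase n t y (-(k + 1))) := by
  rw [highFreqSum_eq_sum_range, highFreqSum_eq_sum_range, ← sum_range_add_sum_Ico _ hAK]
  congr 1
  refine sum_congr rfl fun k hk => ?_
  have hAk : (A : ℝ) ≤ k := by exact_mod_cast (mem_Ico.1 hk).1
  have hcut : 2 ≤ ((k : ℝ) + 1) * δ := hA.trans (by gcongr)
  rw [hφ.tailWeight_eq_inv hcut, hφ.comp_neg.tailWeight_eq_inv hcut, mul_sub]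

lemma exists_norm_highFreqSum_le (hn : 2 ≤ n) {ε : ℝ} (hε : 0 < ε) (M : ℝ≥0) :
    ∃ C : ℝ, 0 < C ∧ ∀ φ, IsLipschitzCutoff M φ → ∀ (u : ℤ) (q : ℕ), [NeZero q] → IsCoprime u q →
      ∀ δ : ℝ, 0 < δ → 1 ≤ q * δ ^ (n - 1) → ∀ y : ℝ,
      ‖highFreqSum φ δ n (u / q) y (q ^ 2)‖ ≤
        C * (q * δ ^ n) ^ (1 / 2 ^ (n - 1) : ℝ) * (q : ℝ) ^ ε := by
  obtain ⟨C, hC, hhalf⟩ := exists_norm_sum_tailWeight_mul_phase_le hn hε M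
  refine ⟨2 * C, by positivity, fun φ hφ u q _ hu δ hδ hqδ y => ?_⟩
  have hu' : IsCoprime ((-1) ^ n * u) (q : ℤ) :=
    (isCoprime_mul_unit_left_left (isUnit_neg_one.pow n) u q).2 hu
  have hpos := hhalf φ hφ u q hu δ hδ hqδ y
  have hneg := hhalf _ hφ.comp_neg _ q hu' δ hδ hqδ (-y)
  push_cast at hneg
  simp only [highFreqSum_eq_sum_range, phase_neg, sum_sub_distrib, ← mul_div_assoc]
  exact (norm_sub_le _ _).trans ((add_le_add hpos hneg).trans_eq (by ring))

lemma inv_le_mul_pow_rpow {q : ℕ} [NeZero q] (hn : 2 ≤ n) (hδ : 0 < δ)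
    (hqδ : 1 ≤ q * δ ^ (n - 1)) :
    1 / (q : ℝ) ≤ (q * δ ^ n) ^ (1 / 2 ^ (n - 1) : ℝ) := by
  have hq : (1 : ℝ) ≤ q := by exact_mod_cast NeZero.one_le
  calc 1 / (q : ℝ) ≤ (1 / (q : ℝ)) ^ (1 / 2 ^ (n - 1) : ℝ) := by
        refine Real.self_le_rpow_of_le_one (by positivity) ?_ ?_
        · exact div_le_one_of_le₀ hq (by positivity)
        · exact div_le_one_of_le₀ (one_le_pow₀ one_le_two) (by positivity)
    _ ≤ (q * δ ^ n) ^ (1 / 2 ^ (n - 1) : ℝ) := by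
        gcongr
        exact (inv_le_of_one_le_mul_pow hn hδ hqδ).trans (le_mul_pow_of_one_le_mul_pow hn hδ hqδ)

/- Up to the frequency `q²` the Weyl bound costs only a logarithm; beyond it the weight is `1 / k`
and `e(u k^n / q + y k)` is quasiperiodic in `k`, so that only its sum over one period matters. -/
theorem exists_tendsto_highFreqSum (hn : 2 ≤ n) {ε : ℝ} (hε : 0 < ε) (M : ℝ≥0) :
    ∃ C : ℝ, 0 < C ∧ ∀ φ, IsLipschitzCutoff M φ → ∀ (u : ℤ) (q : ℕ), [NeZero q] → IsCoprime u q →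
      ∀ δ : ℝ, 0 < δ → 1 ≤ q * δ ^ (n - 1) → ∀ y : ℝ,
      ∃ L : ℂ, Tendsto (highFreqSum φ δ n (u / q) y) atTop (nhds L) ∧
        ‖L‖ ≤ C * (q * δ ^ n) ^ (1 / 2 ^ (n - 1) : ℝ) * (q : ℝ) ^ ε := by
  obtain ⟨C₁, hC₁, hnear⟩ := exists_norm_highFreqSum_le hn hε M
  obtain ⟨C₂, hC₂, hcomplete⟩ := exists_norm_sum_phase_div_le hn hε
  refine ⟨C₁ + 12 * C₂ + 4, by positivity, fun φ hφ u q _ hu δ hδ hqδ y => ?_⟩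
  set E := (q * δ ^ n) ^ (1 / 2 ^ (n - 1) : ℝ)
  have hq : (1 : ℝ) ≤ q := by exact_mod_cast NeZero.one_le
  have hcut : 2 ≤ ((q ^ 2 : ℕ) + 1) * δ := by
    have hqδ1 : 1 ≤ δ * q := (div_le_iff₀ (by positivity)).1 (inv_le_of_one_le_mul_pow hn hδ hqδ)
    push_cast
    nlinarith
  have hlast : q / ((q ^ 2 : ℕ) + 1 : ℝ) ≤ E * (q : ℝ) ^ ε :=
    calc q / ((q ^ 2 : ℕ) + 1 : ℝ) ≤ 1 / q := by
          rw [div_le_div_iff₀ (by positivity) (by positivity)]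
          push_cast
          nlinarith
      _ ≤ E := inv_le_mul_pow_rpow hn hδ hqδ
      _ ≤ E * (q : ℝ) ^ ε :=
          le_mul_of_one_le_right (by positivity) (Real.one_le_rpow hq hε.le)
  obtain ⟨L, hL, hLle⟩ := exists_tendsto_sum_Ico_odd_div_of_quasiperiodic
    (fun k => (norm_phase n (u / q) y k).le) (norm_ee (y * q)) (phase_add_natCast u y) (q ^ 2)
  refine ⟨highFreqSum φ δ n (u / q) y (q ^ 2) + L, ?_, (norm_add_le _ _).trans ?_⟩
  · refine (hL.const_add _).congr' ((eventually_ge_atTop (q ^ 2)).mono fun K hK => ?_)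
    exact (highFreqSum_eq_add_sum_Ico hφ hδ n (u / q) y hK hcut).symm
  · linarith [hnear φ hφ u q hu δ hδ hqδ y, hcomplete u q hu δ hδ hqδ y]

end HighFrequencies

section Decomposition

lemma im_ee (ξ : ℝ) : (ee ξ).im = Real.sin (2 * Real.pi * ξ) := by
  have harg : 2 * Real.pi * Complex.I * ξ = (2 * Real.pi * ξ : ℝ) * Complex.I := by
    push_cast
    ring
  rw [ee, harg, Complex.exp_ofReal_mul_I_im]

lemma phase_add_sub_phase_sub (n : ℕ) (t x γ : ℝ) (k : ℤ) :
    phase n t (x + γ) k - phase n t (x - γ) k =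
      2 * Complex.I * (Real.sin (2 * Real.pi * γ * k) : ℂ) * phase n t x k := by
  have hadd : phase n t (x + γ) k = ee (γ * k) * phase n t x k := by
    simp only [phase, ← ee_add]
    ring_nf
  have hsub : phase n t (x - γ) k = starRingEnd ℂ (ee (γ * k)) * phase n t x k := by
    simp only [phase, ← ee_neg, ← ee_add]
    ring_nf
  rw [hadd, hsub, ← sub_mul, Complex.sub_conj, im_ee]
  push_cast
  ring_nf

lemma sin_div_mul_phase_eq_add (n : ℕ) (γ t x c : ℝ) (k : ℤ) :
    ((Real.sin (2 * Real.pi * γ * k) / (Real.pi * k) : ℝ) : ℂ) * phase n t x k =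
      ((1 / Real.pi : ℝ) : ℂ) *
          (((c * (Real.sin (2 * Real.pi * γ * k) / k) : ℝ) : ℂ) * phase n t x k) +
        1 / (2 * Real.pi * Complex.I) * ((((1 - c) / k : ℝ) : ℂ) * phase n t (x + γ) k -
          (((1 - c) / k : ℝ) : ℂ) * phase n t (x - γ) k) := by
  have hπ : (Real.pi : ℂ) ≠ 0 := by exact_mod_cast Real.pi_ne_zero
  rw [← mul_sub, phase_add_sub_phase_sub]
  obtain rfl | hk := eq_or_ne k 0
  · simp
  · have hk' : (k : ℂ) ≠ 0 := by exact_mod_cast hk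
    push_cast
    field_simp [Complex.I_ne_zero]
    ring

theorem Upartial_eq_Ustar_add {φ : ℝ → ℝ} (hφ : ∀ x, 2 ≤ |x| → φ x = 0) (n : ℕ) (γ x : ℝ)
    {α t : ℝ} (ht : 0 < t) {K : ℕ} (hK : 2 ≤ K * t ^ α) :
    Upartial n γ t x K = Ustar n γ φ α t x + 1 / (2 * Real.pi * Complex.I) *
      (highFreqSum φ (t ^ α) n t (x + γ) K - highFreqSum φ (t ^ α) n t (x - γ) K) := by
  unfold Upartial Ustar
  rw [tsum_eq_sum (s := Icc (-(K : ℤ)) K), sum_filter_of_ne, add_assoc]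
  · congr 1
    rw [highFreqSum, highFreqSum, ← sum_sub_distrib, mul_sum, mul_sum, ← sum_add_distrib]
    exact sum_congr rfl fun k _ => sin_div_mul_phase_eq_add n γ t x _ k
  · rintro k - hk rfl
    simp at hk
  · intro k hk
    have hKk : (K : ℝ) ≤ |(k : ℝ)| := by
      have : (K : ℤ) ≤ |k| := le_of_not_gt fun h => hk (mem_Icc.2 (abs_le.1 h.le))
      exact_mod_cast this
    rw [hφ, zero_mul, Complex.ofReal_zero, zero_mul]
    rw [abs_mul, abs_of_pos (Real.rpow_pos_of_pos ht α)]
    exact hK.trans (by gcongr)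

end Decomposition

section MainTheorem

variable {n q : ℕ} {u : ℤ} {α : ℝ}

lemma one_le_mul_rpow_pow [NeZero q] (hn : 2 ≤ n) (hα : α ≤ ((n : ℝ) - 1)⁻¹)
    (hpos : 0 < (u : ℝ) / q) (hle : (u : ℝ) / q ≤ 1) :
    1 ≤ q * (((u : ℝ) / q) ^ α) ^ (n - 1) := by
  have hq : (0 : ℝ) < q := Nat.cast_pos.2 (NeZero.pos q)
  have hn1 : (0 : ℝ) < (n : ℝ) - 1 := sub_pos.2 (Nat.one_lt_cast.2 hn)
  have hu : (1 : ℝ) ≤ u := by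
    exact_mod_cast Int.cast_pos.1 ((div_pos_iff_of_pos_right hq).1 hpos)
  have hexp : α * (n - 1 : ℕ) ≤ 1 := by
    rw [Nat.cast_pred (by omega), ← le_div_iff₀ hn1, one_div]
    exact hα
  rw [← Real.rpow_mul_natCast hpos.le]
  calc 1 ≤ q * ((u : ℝ) / q) := by rwa [mul_div_cancel₀ _ hq.ne']
    _ ≤ q * ((u : ℝ) / q) ^ (α * (n - 1 : ℕ)) := by
        gcongr
        exact Real.self_le_rpow_of_le_one hpos.le hle hexp

lemma mul_rpow_pow_rpow_mul_rpow {t r : ℝ} (ht : 0 ≤ t) (hr : 0 < r) (n : ℕ) (α β ε : ℝ) :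
    (r * (t ^ α) ^ n) ^ β * r ^ ε = t ^ (α * n * β) * r ^ (β + ε) := by
  rw [Real.mul_rpow hr.le (by positivity), ← Real.rpow_mul_natCast ht, ← Real.rpow_mul ht,
    Real.rpow_add hr]
  ring

lemma norm_one_div_two_pi_I_le : ‖1 / (2 * Real.pi * Complex.I)‖ ≤ 1 := by
  rw [norm_div, norm_mul, norm_mul, Complex.norm_I, Complex.norm_real, norm_one, Complex.norm_two,
    Real.norm_of_nonneg Real.pi_pos.le]
  exact div_le_one_of_le₀ (by linarith [Real.two_le_pi]) (by positivity)

theorem stmt17_general (hn : 2 ≤ n) {ε : ℝ} (hε : 0 < ε) (M : ℝ≥0) :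
    ∃ C > (0 : ℝ), ∀ {φ : ℝ → ℝ}, IsLipschitzCutoff M φ → ∀ {α : ℝ}, α ≤ ((n : ℝ) - 1)⁻¹ →
      ∀ (γ : ℝ) (u q : ℤ), 1 ≤ q → Int.gcd u q = 1 →
      0 < (u : ℝ) / (q : ℝ) → (u : ℝ) / (q : ℝ) ≤ 1 → ∀ x : ℝ,
      ∃ L : ℂ, Tendsto (fun K : ℕ => Upartial n γ ((u : ℝ) / (q : ℝ)) x K) atTop (nhds L) ∧
        ‖L - Ustar n γ φ α ((u : ℝ) / (q : ℝ)) x‖ ≤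
          C * ((u : ℝ) / (q : ℝ)) ^ (α * n / 2 ^ (n - 1)) *
            (q : ℝ) ^ (1 / 2 ^ (n - 1) + ε) := by
  obtain ⟨C, hC, hhigh⟩ := exists_tendsto_highFreqSum hn hε M
  refine ⟨2 * C, by positivity, fun {φ} hφ {α} hα γ u q hq hu hpos hle x => ?_⟩
  lift q to ℕ using by omega
  have : NeZero q := ⟨by omega⟩
  simp only [Int.cast_natCast] at hpos hle ⊢
  have hδ : 0 < ((u : ℝ) / q) ^ α := Real.rpow_pos_of_pos hpos α
  have hhigh := hhigh φ hφ u q (Int.isCoprime_iff_gcd_eq_one.2 hu) _ hδ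
    (one_le_mul_rpow_pow hn hα hpos hle)
  obtain ⟨L₁, hL₁, hL₁le⟩ := hhigh (x + γ)
  obtain ⟨L₂, hL₂, hL₂le⟩ := hhigh (x - γ)
  refine ⟨Ustar n γ φ α (u / q) x + 1 / (2 * Real.pi * Complex.I) * (L₁ - L₂), ?_, ?_⟩
  · refine (((hL₁.sub hL₂).const_mul _).const_add _).congr' ?_
    have hlarge := (tendsto_natCast_atTop_atTop.atTop_mul_const hδ).eventually_ge_atTop 2
    exact hlarge.mono fun K hK => (Upartial_eq_Ustar_add hφ.eq_zero n γ x hpos hK).symm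
  · have hbound := mul_rpow_pow_rpow_mul_rpow hpos.le (Nat.cast_pos.2 (NeZero.pos q)) n α
      (1 / 2 ^ (n - 1)) ε
    rw [mul_one_div] at hbound
    rw [mul_assoc, hbound] at hL₁le hL₂le
    rw [add_sub_cancel_left, norm_mul, mul_assoc (2 * C)]
    refine (mul_le_of_le_one_left (norm_nonneg (L₁ - L₂)) norm_one_div_two_pi_I_le).trans ?_
    linarith [norm_sub_le L₁ L₂]

end MainTheorem

/-- with `N = 2^{n−1}` there are `C > 0` and `q₀` such that for every reduced
fraction `t = u/q` with `q ≥ q₀` and `0 < t ≤ 1`, and every real `x`, `U(t,x)` exists and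
`|U(t,x) − U*(t,x)| ≤ C·t^{αn/N}·q^{1/N + ε}`. -/
theorem stmt17 (n : ℕ) (hn : 2 ≤ n) (Δ : ℝ) (hΔ0 : 0 < Δ) (hΔ1 : Δ < 1)
    (hΔ2 : n = 2 → Δ < 1 / 2) (γ : ℝ) (hγ : γ ∈ Set.Ioo (0 : ℝ) (1 / 2))
    (α : ℝ) (hα1 : ((n : ℝ) - Δ)⁻¹ < α) (hα2 : α < ((n : ℝ) - 1)⁻¹)
    (ε : ℝ) (hε : 0 < ε) (φ : ℝ → ℝ) (hφ : GoodPhi φ) :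
    ∃ C > (0 : ℝ), ∃ q₀ : ℤ, ∀ u q : ℤ, 1 ≤ q → q₀ ≤ q → Int.gcd u q = 1 →
      0 < (u : ℝ) / (q : ℝ) → (u : ℝ) / (q : ℝ) ≤ 1 → ∀ x : ℝ,
      ∃ L : ℂ, Tendsto (fun K : ℕ => Upartial n γ ((u : ℝ) / (q : ℝ)) x K) atTop (nhds L) ∧
        ‖L - Ustar n γ φ α ((u : ℝ) / (q : ℝ)) x‖ ≤
          C * ((u : ℝ) / (q : ℝ)) ^ (α * n / 2 ^ (n - 1)) *
            (q : ℝ) ^ (1 / 2 ^ (n - 1) + ε) := by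
  obtain ⟨M, hM⟩ := hφ.exists_isLipschitzCutoff
  obtain ⟨C, hC, hbound⟩ := stmt17_general hn hε M
  exact ⟨C, hC, 0, fun u q hq _ => hbound hM hα2.le γ u q hq⟩
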